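/- arXiv:math/0312517 — 9 statements merged into one kernel-verified Lean document; each statement's English description precedes it below -/
import Mathlib

section
/- Let V be a finite-dimensional complex normed vector space of dimension p. Then there exists a constant C > 0 such that for every linear endomorphism A of V all of whose eigenvalues have modulus at most 1, one has ‖A^n‖ ≤ C·(1 + ‖A‖)^(p−1)·(1 + n)^p for every integer n ≥ 0. -/
/-!
Let `M = 1 + ‖A‖` and let `z₁, …, z_p` be the eigenvalues of `A`, with multiplicity. Put
`T_k = (A - z₁) ⋯ (A - z_k)`, so that `‖T_k‖ ≤ M ^ k` because `‖z_i‖ ≤ 1`, and `T_p = 0` by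
Cayley–Hamilton. The identity `T_k A ^ (n + 1) = T_(k+1) A ^ n + z_(k+1) T_k A ^ n` and a double
induction (on `p - k` and on `n`) give `‖T_k A ^ n‖ ≤ M ^ (p - 1) * (1 + n) ^ (p - k)`. The case
`k = 0` is the theorem, with `C = 1`.
-/

/-- The double induction: `T` plays the role of the partial product `T_k`, and `l` lists the
`z_i` that are not used in it. -/
theorem norm_mul_pow_le_of_mul_prod_eq_zero {R : Type*} [NormedRing R] [NormedAlgebra ℂ R]
    (A : R) (l : List ℂ) (hl : ∀ z ∈ l, ‖z‖ ≤ 1) (k : ℕ) (T : R)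
    (hT : ‖T‖ ≤ (1 + ‖A‖) ^ k)
    (h0 : T * (l.map fun z => A - algebraMap ℂ R z).prod = 0) (n : ℕ) :
    ‖T * A ^ n‖ ≤ (1 + ‖A‖) ^ (k + l.length - 1) * (1 + (n : ℝ)) ^ l.length := by
  have hM : (1 : ℝ) ≤ 1 + ‖A‖ := by linarith [norm_nonneg A]
  induction l generalizing k T n with
  | nil =>
    have hT0 : T = 0 := by simpa using h0
    rw [hT0, zero_mul, norm_zero]
    positivity
  | cons z l ih =>
    have hz : ‖z‖ ≤ 1 := hl z (by simp)
    have hT' : ‖T * (A - algebraMap ℂ R z)‖ ≤ (1 + ‖A‖) ^ (k + 1) := by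
      have e : T * (A - algebraMap ℂ R z) = T * A - z • T := by
        rw [mul_sub, Algebra.smul_def, Algebra.commutes]
      calc ‖T * (A - algebraMap ℂ R z)‖ ≤ ‖T * A‖ + ‖z • T‖ := by
            rw [e]; exact norm_sub_le _ _
        _ ≤ ‖T‖ * ‖A‖ + 1 * ‖T‖ := by
            rw [norm_smul]
            gcongr
            exact norm_mul_le _ _
        _ = ‖T‖ * (1 + ‖A‖) := by ring
        _ ≤ (1 + ‖A‖) ^ (k + 1) := by rw [pow_succ]; gcongr
    have h0' : T * (A - algebraMap ℂ R z) *
        (l.map fun z => A - algebraMap ℂ R z).prod = 0 := by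
      rw [mul_assoc]; simpa using h0
    have ih' := ih (fun w hw => hl w (by simp [hw])) (k + 1) _ hT' h0'
    have e1 : k + 1 + l.length - 1 = k + l.length := by omega
    have e2 : k + (z :: l).length - 1 = k + l.length := by simp
    rw [e1] at ih'
    rw [e2, List.length_cons]
    induction n with
    | zero =>
      simp only [pow_zero, mul_one, Nat.cast_zero, add_zero, one_pow]
      exact hT.trans (pow_le_pow_right₀ hM (by omega))
    | succ n ihn =>
      have e : T * A ^ (n + 1) = T * (A - algebraMap ℂ R z) * A ^ n + z • (T * A ^ n) := by
        rw [mul_sub, sub_mul, Algebra.smul_def, pow_succ', mul_assoc T A,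
          ← Algebra.commutes z T, mul_assoc _ T, sub_add_cancel]
      push_cast
      calc ‖T * A ^ (n + 1)‖
          ≤ ‖T * (A - algebraMap ℂ R z) * A ^ n‖ + ‖z • (T * A ^ n)‖ := by
            rw [e]; exact norm_add_le _ _
        _ ≤ ‖T * (A - algebraMap ℂ R z) * A ^ n‖ + 1 * ‖T * A ^ n‖ := by
            rw [norm_smul]; gcongr
        _ ≤ (1 + ‖A‖) ^ (k + l.length) * (1 + (n : ℝ)) ^ l.length +
            1 * ((1 + ‖A‖) ^ (k + l.length) * (1 + (n : ℝ)) ^ (l.length + 1)) := by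
            gcongr
            exact ih' n
        _ = (1 + ‖A‖) ^ (k + l.length) *
            ((1 + (n : ℝ)) ^ l.length * (1 + ((n : ℝ) + 1))) := by ring
        _ ≤ (1 + ‖A‖) ^ (k + l.length) * (1 + ((n : ℝ) + 1)) ^ (l.length + 1) := by
            rw [pow_succ (1 + ((n : ℝ) + 1))]
            gcongr
            linarith

/-- Let `V` be a finite-dimensional complex normed vector space of dimension `p`. Then there
exists a constant `C > 0` such that for every continuous linear endomorphism `A` of `V` all of
whose eigenvalues (elements of the spectrum) have modulus at most `1`, one has
`‖A ^ n‖ ≤ C * (1 + ‖A‖) ^ (p - 1) * (1 + n) ^ p` for every `n ≥ 0`. -/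
theorem stmt0 (V : Type*) [NormedAddCommGroup V] [NormedSpace ℂ V]
    [FiniteDimensional ℂ V] (p : ℕ) (hp : Module.finrank ℂ V = p) :
    ∃ C > (0 : ℝ), ∀ A : V →L[ℂ] V, (∀ z ∈ spectrum ℂ A, ‖z‖ ≤ 1) →
      ∀ n : ℕ, ‖A ^ n‖ ≤ C * (1 + ‖A‖) ^ (p - 1) * (1 + (n : ℝ)) ^ p := by
  refine ⟨1, one_pos, fun A hA n => ?_⟩
  obtain ⟨B, rfl⟩ := (Module.End.toContinuousLinearMap V (𝕜 := ℂ)).surjective A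
  rw [AlgEquiv.spectrum_eq] at hA
  have hs : B.charpoly.Splits := IsAlgClosed.splits _
  have hlen : B.charpoly.roots.toList.length = p := by
    rw [Multiset.length_toList, ← hs.natDegree_eq_card_roots, LinearMap.charpoly_natDegree, hp]
  have hprod : (B.charpoly.roots.toList.map fun z =>
      B - algebraMap ℂ (Module.End ℂ V) z).prod = 0 := by
    have h1 : (B.charpoly.roots.toList.map fun z => Polynomial.X - Polynomial.C z).prod
        = B.charpoly := by
      conv_rhs => rw [hs.eq_prod_roots_of_monic B.charpoly_monic]
      rw [← Multiset.prod_coe, ← Multiset.map_coe, Multiset.coe_toList]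
    have h2 := congrArg (Polynomial.aeval B) h1
    rw [LinearMap.aeval_self_charpoly, map_list_prod, List.map_map] at h2
    simpa [Function.comp_def] using h2
  have key := norm_mul_pow_le_of_mul_prod_eq_zero
    (Module.End.toContinuousLinearMap V (𝕜 := ℂ) B) B.charpoly.roots.toList
    (fun z hz => hA z (Module.End.hasEigenvalue_iff_mem_spectrum.1
      ((Module.End.hasEigenvalue_iff_isRoot_charpoly _ _).2
        (Polynomial.isRoot_of_mem_roots (Multiset.mem_toList.1 hz)))))
    0 1 (by rw [pow_zero]; exact ContinuousLinearMap.norm_id_le)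
    (by
      have h3 := congrArg (Module.End.toContinuousLinearMap V (𝕜 := ℂ)) hprod
      rw [map_list_prod, List.map_map] at h3
      rw [one_mul]
      simpa [Function.comp_def] using h3) n
  simpa [hlen] using key
end

section
/- Let V be a finite-dimensional complex normed vector space of dimension p, and let r′ > r > 0. Then there exists a constant C > 0 (depending on r, r′ and V) such that for every linear endomorphism A of V all of whose eigenvalues have modulus at most r, one has ‖A^n‖ ≤ C·(r′)^n·(1 + ‖A‖)^(p−1) for every integer n ≥ 0. -/
/-!
Write `P = (X - λ₁) ⋯ (X - λ_p)` for the characteristic polynomial of `A`, so that `P(A) = 0` by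
Cayley–Hamilton, and put `B_k = (A - λ₁) ⋯ (A - λ_k)`. From
`A ^ (n + 1) * B_k = λ_{k+1} • (A ^ n * B_k) + A ^ n * B_{k+1}` a bound
`‖A ^ n * B_{k+1}‖ ≤ M * r' ^ n` for all `n` propagates to `‖A ^ n * B_k‖ ≤ K * r' ^ n`, provided
`‖B_k‖ ≤ K` and `M ≤ K * (r' - r)`. The gap between `r` and `r'` absorbs the geometric
recursion, so no power of `n` appears. Descending from `B_p = 0` to `B_0 = 1`, where
`‖B_{k+1}‖ ≤ (1 + r) * (1 + ‖A‖) * ‖B_k‖`, yields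
`‖A ^ n‖ ≤ r' ^ n * ∑ k < p, ((1 + r) / (r' - r) * (1 + ‖A‖)) ^ k`
(`norm_pow_mul_le_of_aeval_prod`), a polynomial of degree at most `p - 1` in `1 + ‖A‖`.
-/

open Polynomial in
/-- The descent along the factors `X - λ`: each factor moved from the annihilating polynomial
into `B` costs a factor `(1 + r) / (r' - r) * (1 + ‖A‖)`. -/
theorem norm_pow_mul_le_of_aeval_prod {R : Type*} [NormedRing R] [NormedAlgebra ℂ R]
    {r r' : ℝ} (hr : 0 < r) (hrr' : r < r') (A : R) (s : Multiset ℂ) :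
    (∀ z ∈ s, ‖z‖ ≤ r) → ∀ B : R, aeval A (s.map fun z => X - C z).prod * B = 0 →
      ∀ n : ℕ, ‖A ^ n * B‖ ≤ r' ^ n *
        (‖B‖ * ∑ k ∈ Finset.range s.card, ((1 + r) / (r' - r) * (1 + ‖A‖)) ^ k) := by
  have hd : 0 < r' - r := sub_pos.2 hrr'
  have hA := norm_nonneg A
  induction s using Multiset.induction with
  | empty =>
    intro _ B hB n
    have hB0 : B = 0 := by simpa using hB
    simp [hB0]
  | cons a s ih =>
    intro hs B hB n
    have ha : ‖a‖ ≤ r := hs a (Multiset.mem_cons_self a s)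
    have hB' : aeval A (s.map fun z => X - C z).prod * (A * B - a • B) = 0 := by
      rw [Multiset.map_cons, Multiset.prod_cons, mul_comm, map_mul, mul_assoc] at hB
      simpa [sub_mul, Algebra.smul_def] using hB
    have key := ih (fun z hz => hs z (Multiset.mem_cons_of_mem hz)) _ hB'
    rw [Multiset.card_cons, Finset.sum_range_succ']
    simp only [pow_succ, ← Finset.sum_mul, pow_zero]
    set q := (1 + r) / (r' - r) * (1 + ‖A‖) with hq
    have hq0 : 0 ≤ q := by positivity
    set S := ∑ k ∈ Finset.range s.card, q ^ k with hS
    have hS0 : 0 ≤ S := Finset.sum_nonneg fun _ _ => pow_nonneg hq0 _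
    have hqd : (r' - r) * q = (1 + r) * (1 + ‖A‖) := by rw [hq]; field_simp
    have hstep : ‖A * B - a • B‖ ≤ (r' - r) * q * ‖B‖ := by
      calc ‖A * B - a • B‖ ≤ ‖A * B‖ + ‖a • B‖ := norm_sub_le _ _
        _ ≤ ‖A‖ * ‖B‖ + r * ‖B‖ := by
          rw [norm_smul]
          gcongr
          exact norm_mul_le _ _
        _ ≤ (1 + r) * (1 + ‖A‖) * ‖B‖ := by
          have := mul_nonneg hr.le hA
          rw [← add_mul]
          gcongr
          nlinarith
        _ = _ := by rw [hqd]
    have hr' : 0 ≤ r' := (hr.trans hrr').le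
    have hb := norm_nonneg B
    induction n with
    | zero =>
      have : 0 ≤ ‖B‖ * (S * q) := by positivity
      simp only [pow_zero, one_mul]
      linarith
    | succ n ihn =>
      have hrec : A ^ (n + 1) * B = a • (A ^ n * B) + A ^ n * (A * B - a • B) := by
        rw [mul_sub, mul_smul_comm, pow_succ, mul_assoc]
        abel
      have hp : 0 ≤ r' ^ n := pow_nonneg hr' n
      calc ‖A ^ (n + 1) * B‖ ≤ ‖a‖ * ‖A ^ n * B‖ + ‖A ^ n * (A * B - a • B)‖ := by
            rw [hrec, ← norm_smul]
            exact norm_add_le _ _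
        _ ≤ r * (r' ^ n * (‖B‖ * (S * q + 1))) + r' ^ n * ((r' - r) * q * ‖B‖ * S) := by
            refine add_le_add (mul_le_mul ha ihn (norm_nonneg _) hr.le) ((key n).trans ?_)
            gcongr
        _ ≤ r' ^ (n + 1) * (‖B‖ * (S * q + 1)) := by
            have : 0 ≤ r' ^ n * ‖B‖ * (r' - r) := by positivity
            rw [pow_succ]
            linarith

/-- Let `V` be a finite-dimensional complex normed vector space of dimension `p`, and let
`r' > r > 0`. Then there exists a constant `C > 0` such that for every continuous linear
endomorphism `A` of `V` all of whose eigenvalues have modulus at most `r`, one has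
`‖A ^ n‖ ≤ C * r' ^ n * (1 + ‖A‖) ^ (p - 1)` for every `n ≥ 0`. -/
theorem stmt1 (V : Type*) [NormedAddCommGroup V] [NormedSpace ℂ V]
    [FiniteDimensional ℂ V] (p : ℕ) (hp : Module.finrank ℂ V = p)
    (r r' : ℝ) (hr : 0 < r) (hrr' : r < r') :
    ∃ C > (0 : ℝ), ∀ A : V →L[ℂ] V, (∀ z ∈ spectrum ℂ A, ‖z‖ ≤ r) →
      ∀ n : ℕ, ‖A ^ n‖ ≤ C * r' ^ n * (1 + ‖A‖) ^ (p - 1) := by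
  have hd : 0 < r' - r := sub_pos.2 hrr'
  have hr' : 0 < r' := hr.trans hrr'
  have hC : 0 ≤ ∑ k ∈ Finset.range p, ((1 + r) / (r' - r)) ^ k :=
    Finset.sum_nonneg fun _ _ => by positivity
  -- The summand `1` only serves to keep the constant positive when `p = 0`.
  refine ⟨∑ k ∈ Finset.range p, ((1 + r) / (r' - r)) ^ k + 1, by linarith, fun A hA n => ?_⟩
  let φ := (Module.End.toContinuousLinearMap V (𝕜 := ℂ)).symm.toAlgHom
  let P := (φ A).charpoly
  have hsplit : P.Splits := IsAlgClosed.splits P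
  have hmonic : P.Monic := (φ A).charpoly_monic
  have hcard : P.roots.card = p := by
    rw [← hsplit.natDegree_eq_card_roots, LinearMap.charpoly_natDegree, hp]
  have hroots : ∀ z ∈ P.roots, ‖z‖ ≤ r := fun z hz => hA z <|
    AlgHom.spectrum_apply_subset φ A
      ((Module.End.hasEigenvalue_iff_isRoot_charpoly (φ A) z).2
        (Polynomial.isRoot_of_mem_roots hz)).mem_spectrum
  have hzero : Polynomial.aeval A P = 0 := by
    apply ContinuousLinearMap.coe_injective
    change φ _ = φ 0
    rw [← Polynomial.aeval_algHom_apply, map_zero]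
    exact (φ A).aeval_self_charpoly
  have h := norm_pow_mul_le_of_aeval_prod hr hrr' A P.roots hroots 1 (by
    rw [← hsplit.eq_prod_roots_of_monic hmonic, hzero, zero_mul]) n
  rw [mul_one, hcard] at h
  have hT : 1 ≤ 1 + ‖A‖ := le_add_of_nonneg_right (norm_nonneg A)
  have hsum : ∑ k ∈ Finset.range p, ((1 + r) / (r' - r) * (1 + ‖A‖)) ^ k ≤
      (∑ k ∈ Finset.range p, ((1 + r) / (r' - r)) ^ k) * (1 + ‖A‖) ^ (p - 1) := by
    rw [Finset.sum_mul]
    refine Finset.sum_le_sum fun k hk => ?_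
    rw [mul_pow]
    have : k ≤ p - 1 := Nat.le_sub_one_of_lt (Finset.mem_range.1 hk)
    gcongr
  have hone : ‖(1 : V →L[ℂ] V)‖ ≤ 1 := ContinuousLinearMap.norm_id_le
  have hsum0 : 0 ≤ ∑ k ∈ Finset.range p, ((1 + r) / (r' - r) * (1 + ‖A‖)) ^ k :=
    Finset.sum_nonneg fun _ _ => by positivity
  calc ‖A ^ n‖ ≤ r' ^ n *
        (1 * ∑ k ∈ Finset.range p, ((1 + r) / (r' - r) * (1 + ‖A‖)) ^ k) := by
        refine h.trans ?_
        gcongr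
    _ ≤ r' ^ n * ((∑ k ∈ Finset.range p, ((1 + r) / (r' - r)) ^ k + 1) *
          (1 + ‖A‖) ^ (p - 1)) := by
        rw [one_mul]
        gcongr
        refine hsum.trans ?_
        gcongr
        linarith
    _ = _ := by ring
end

section
/- Let V be a finite-dimensional complex normed vector space of dimension p, let ε > 0, and let b > 0 satisfy 1 − ε < e^(−b). Then there exists a constant C > 0 (depending only on b, ε and V) with the following property. Let A be a linear endomorphism of V each of whose eigenvalues has either modulus equal to 1 or modulus at most 1 − ε, and let P_{<1} denote the projection of V onto the sum of the generalized eigenspaces of A for eigenvalues of modulus strictly less than 1, along the sum of the generalized eigenspaces for eigenvalues of modulus 1. Then P_{<1} ∘ A^n = (P_{<1} ∘ A)^n for all n, and ‖P_{<1} ∘ A^n‖ ≤ C·(1 + ‖P_{<1} ∘ A‖)^(p−1)·e^(−b·n) for every integer n ≥ 1. -/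
/-!
Put `B = P ∘ A`. Since `V` is the span of the generalized eigenspaces of `A`, the hypotheses on `P`
make it an idempotent commuting with `A`, so `P ∘ A ^ n = B ^ n`, and every eigenvalue of `B` has
modulus at most `r = max (1 - ε) 0 < q = exp (-b)` (`norm_root_charpoly_le`).

It remains to bound `B ^ n` uniformly (`norm_mul_pow_le`). By Cayley–Hamilton,
`(B - λ₁) ⋯ (B - λ_p) = 0` with `‖λᵢ‖ ≤ r`. For any `x` annihilated by such a product, set
`y = x (B - λ₁)`, which is annihilated by one factor fewer; then
`x B ^ (n + 1) = λ₁ x B ^ n + y B ^ n`, and a bound `‖y B ^ n‖ ≤ M q ^ n` yields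
`‖x B ^ n‖ ≤ D q ^ n` as soon as `D ≥ ‖x‖` and `r D + M ≤ q D`. Each factor costs one power of
`‖B - λᵢ‖ ≤ 1 + ‖B‖`, except the last one, for which `M = 0`; hence the exponent `p - 1`.
-/

/-- The constant for `k` factors: `C₀ = 0` and `C_{k+1} = 1 + C_k / (q - r)`. -/
noncomputable def growthConst (q r : ℝ) : ℕ → ℝ
  | 0 => 0
  | k + 1 => 1 + growthConst q r k / (q - r)

lemma growthConst_nonneg {q r : ℝ} (h : r < q) (k : ℕ) : 0 ≤ growthConst q r k := by
  induction k with
  | zero => exact le_rfl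
  | succ k ih =>
    have : 0 < q - r := sub_pos.2 h
    simp only [growthConst]
    positivity

/-- Uniform growth bound for `x * B ^ n` when `x` is annihilated by a product of factors `B - a`
with `‖a‖ ≤ r < q`. -/
lemma norm_mul_pow_le {R : Type*} [NormedRing R] [NormedAlgebra ℂ R] {q r : ℝ} (hr : 0 ≤ r)
    (hr1 : r ≤ 1) (hrq : r < q) (h1 : ‖(1 : R)‖ ≤ 1) (B : R) (l : List ℂ)
    (hl : ∀ a ∈ l, ‖a‖ ≤ r) (x : R)
    (hx : x * (l.map (fun a => B - algebraMap ℂ R a)).prod = 0) (n : ℕ) :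
    ‖x * B ^ n‖ ≤ growthConst q r l.length * ‖x‖ * (1 + ‖B‖) ^ (l.length - 1) * q ^ n := by
  induction l generalizing x n with
  | nil =>
    have : x = 0 := by simpa using hx
    simp [this]
  | cons a l ih =>
    have hq : 0 < q := hr.trans_lt hrq
    have hqr : 0 < q - r := sub_pos.2 hrq
    have ha : ‖a‖ ≤ r := hl a (by simp)
    set y := x * (B - algebraMap ℂ R a) with hy
    have hyB := ih (fun c hc => hl c (by simp [hc])) y
      (by simpa [hy, mul_assoc] using hx)
    have hBa : ‖B - algebraMap ℂ R a‖ ≤ 1 + ‖B‖ := by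
      have h2 : ‖algebraMap ℂ R a‖ ≤ 1 := by
        rw [norm_algebraMap]
        exact mul_le_one₀ (ha.trans hr1) (norm_nonneg _) h1
      linarith [norm_sub_le B (algebraMap ℂ R a)]
    have hyn : ‖y‖ ≤ ‖x‖ * (1 + ‖B‖) :=
      (norm_mul_le _ _).trans (mul_le_mul_of_nonneg_left hBa (norm_nonneg _))
    have hC := growthConst_nonneg hrq l.length
    set K := ‖x‖ * (1 + ‖B‖) ^ l.length with hK
    have hK0 : 0 ≤ K := by positivity
    have hxK : ‖x‖ ≤ K :=
      le_mul_of_one_le_right (norm_nonneg _) (one_le_pow₀ (by linarith [norm_nonneg B]))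
    have hM : growthConst q r l.length * ‖y‖ * (1 + ‖B‖) ^ (l.length - 1)
        ≤ growthConst q r l.length * K := by
      -- with no factor left the constant is zero, which absorbs the truncated exponent
      rcases Nat.eq_zero_or_pos l.length with h0 | h0
      · simp [h0, growthConst]
      · calc _ ≤ growthConst q r l.length * (‖x‖ * (1 + ‖B‖)) * (1 + ‖B‖) ^ (l.length - 1) := by
              gcongr
          _ = growthConst q r l.length * K := by
              rw [hK, ← Nat.sub_add_cancel h0, pow_succ, Nat.add_sub_cancel]
              ring
    have hD : growthConst q r (l.length + 1) * (q - r) =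
        (q - r) + growthConst q r l.length := by
      simp only [growthConst]
      field_simp
    have hD1 : 1 ≤ growthConst q r (l.length + 1) := by
      simp only [growthConst]
      have : 0 ≤ growthConst q r l.length / (q - r) := by positivity
      linarith
    suffices h : ‖x * B ^ n‖ ≤ growthConst q r (l.length + 1) * K * q ^ n by
      simpa [hK, mul_assoc] using h
    induction n with
    | zero =>
      simp only [pow_zero, mul_one]
      nlinarith
    | succ n ihn =>
      have hrec : x * B ^ (n + 1) = a • (x * B ^ n) + y * B ^ n := by
        rw [hy, pow_succ', mul_assoc x, sub_mul, mul_sub, ← Algebra.smul_def, mul_smul_comm]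
        abel
      calc ‖x * B ^ (n + 1)‖ ≤ ‖a‖ * ‖x * B ^ n‖ + ‖y * B ^ n‖ := by
            rw [hrec, ← norm_smul]
            exact norm_add_le _ _
        _ ≤ r * (growthConst q r (l.length + 1) * K * q ^ n)
              + growthConst q r l.length * K * q ^ n := by
            refine add_le_add (mul_le_mul ha ihn (norm_nonneg _) hr) ((hyB n).trans ?_)
            exact mul_le_mul_of_nonneg_right hM (by positivity)
        _ ≤ growthConst q r (l.length + 1) * K * q ^ (n + 1) := by
            have h3 : 0 ≤ (q - r) * (K * q ^ n) := by positivity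
            have h4 : growthConst q r (l.length + 1) * (q - r) * (K * q ^ n) =
                ((q - r) + growthConst q r l.length) * (K * q ^ n) := by rw [hD]
            rw [pow_succ]
            nlinarith

section Projection

variable {V : Type*} [NormedAddCommGroup V] [NormedSpace ℂ V] [FiniteDimensional ℂ V]

/-- Two endomorphisms agree once they agree on the generalized eigenspaces of `A` for scalars of
modulus `≤ 1`: these eigenspaces span `V`, as the remaining ones are trivial. -/
lemma genEigenspace_induction {ε : ℝ} (hε : 0 < ε) (A : V →L[ℂ] V)
    (hA : ∀ z ∈ spectrum ℂ A, ‖z‖ = 1 ∨ ‖z‖ ≤ 1 - ε) {S T : V →L[ℂ] V}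
    (h : ∀ μ : ℂ, ‖μ‖ < 1 ∨ ‖μ‖ = 1 →
      ∀ v ∈ Module.End.maxGenEigenspace (A : V →ₗ[ℂ] V) μ, S v = T v) : S = T := by
  ext v
  have hv : v ∈ ⨆ μ : ℂ, Module.End.maxGenEigenspace (A : V →ₗ[ℂ] V) μ := by
    rw [Module.End.iSup_maxGenEigenspace_eq_top]
    trivial
  induction hv using Submodule.iSup_induction' with
  | zero => simp
  | add x y _ _ hx hy => rw [map_add, map_add, hx, hy]
  | mem μ v hv =>
    by_cases hμ : Module.End.HasEigenvalue (A : V →ₗ[ℂ] V) μ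
    · have hs : μ ∈ spectrum ℂ A := by
        rw [ContinuousLinearMap.spectrum_eq]
        exact hμ.mem_spectrum
      refine h μ ?_ v hv
      rcases hA μ hs with h1 | h1
      · exact Or.inr h1
      · exact Or.inl (by linarith)
    · have hbot : Module.End.maxGenEigenspace (A : V →ₗ[ℂ] V) μ = ⊥ := by
        by_contra hne
        have hgen : Module.End.HasUnifEigenvalue (A : V →ₗ[ℂ] V) μ ⊤ := hne
        exact hμ (hgen.lt zero_lt_one)
      rw [hbot, Submodule.mem_bot] at hv
      simp [hv]

lemma mul_pow_eq_of_comm {R : Type*} [Monoid R] {P A : R} (hPP : P * P = P)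
    (hPA : P * A = A * P) {n : ℕ} (hn : 1 ≤ n) : P * A ^ n = (P * A) ^ n := by
  rw [(show Commute P A from hPA).mul_pow, IsIdempotentElem.pow_eq hPP (by omega)]

/-- The eigenvalues of `P * A` are `0` or eigenvalues of `A` of modulus `< 1`. -/
lemma norm_root_charpoly_le {ε : ℝ} (A P : V →L[ℂ] V)
    (hA : ∀ z ∈ spectrum ℂ A, ‖z‖ = 1 ∨ ‖z‖ ≤ 1 - ε)
    (hPP : P * P = P) (hPA : P * A = A * P)
    (hP : ∀ μ : ℂ, ‖μ‖ = 1 →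
      ∀ v ∈ Module.End.maxGenEigenspace (A : V →ₗ[ℂ] V) μ, P v = 0)
    (μ : ℂ) (hμ : μ ∈ ((P * A : V →L[ℂ] V) : V →ₗ[ℂ] V).charpoly.roots) :
    ‖μ‖ ≤ max (1 - ε) 0 := by
  have hev : Module.End.HasEigenvalue ((P * A : V →L[ℂ] V) : V →ₗ[ℂ] V) μ :=
    (Module.End.hasEigenvalue_iff_isRoot_charpoly _ _).2 (Polynomial.isRoot_of_mem_roots hμ)
  obtain ⟨v, hv⟩ := hev.exists_hasEigenvector
  have hBv : P (A v) = μ • v := hv.apply_eq_smul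
  by_cases h0 : μ = 0
  · simp [h0]
  have hPv : P v = v := by
    have h1 : P (P (A v)) = P (A v) := congrArg (fun T : V →L[ℂ] V => T (A v)) hPP
    rw [hBv, map_smul] at h1
    exact smul_right_injective V h0 h1
  have hAv : A v = μ • v := by
    have h1 : P (A v) = A (P v) := congrArg (fun T : V →L[ℂ] V => T v) hPA
    rw [← hBv, h1, hPv]
  have hvA : v ∈ Module.End.eigenspace (A : V →ₗ[ℂ] V) μ := Module.End.mem_eigenspace_iff.2 hAv
  have hs : μ ∈ spectrum ℂ A := by
    rw [ContinuousLinearMap.spectrum_eq]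
    exact (Module.End.hasEigenvalue_of_hasEigenvector ⟨hvA, hv.2⟩).mem_spectrum
  rcases hA μ hs with h1 | h1
  · refine absurd ?_ hv.2
    rw [← hPv]
    exact hP μ h1 v (Module.End.eigenspace_le_maxGenEigenspace hvA)
  · exact h1.trans (le_max_left _ _)

/-- Cayley–Hamilton, with the characteristic polynomial split into linear factors. -/
lemma prod_sub_roots_eq_zero (B : V →L[ℂ] V) :
    ((B : V →ₗ[ℂ] V).charpoly.roots.toList.map
      (fun a => B - algebraMap ℂ (V →L[ℂ] V) a)).prod = 0 := by
  let φ : (V →L[ℂ] V) →ₐ[ℂ] (V →ₗ[ℂ] V) :=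
    { ContinuousLinearMap.toLinearMapRingHom with commutes' := fun _ => rfl }
  have hinj : Function.Injective φ := ContinuousLinearMap.coe_injective
  have h1 : Polynomial.aeval B (B : V →ₗ[ℂ] V).charpoly = 0 := by
    apply hinj
    rw [map_zero, ← Polynomial.aeval_algHom_apply]
    exact LinearMap.aeval_self_charpoly (B : V →ₗ[ℂ] V)
  have h2 : (B : V →ₗ[ℂ] V).charpoly =
      ((B : V →ₗ[ℂ] V).charpoly.roots.toList.map
        (fun a => Polynomial.X - Polynomial.C a)).prod := by
    conv_lhs => rw [(IsAlgClosed.splits (B : V →ₗ[ℂ] V).charpoly).eq_prod_roots_of_monic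
      (LinearMap.charpoly_monic _)]
    rw [← Multiset.prod_coe, ← Multiset.map_coe, Multiset.coe_toList]
  rw [h2, map_list_prod, List.map_map] at h1
  have h3 : (fun a => B - algebraMap ℂ (V →L[ℂ] V) a) =
      Polynomial.aeval B ∘ fun a => Polynomial.X - Polynomial.C a := by
    funext a
    simp
  rw [h3]
  exact h1

end Projection

/-- Let `V` be a finite-dimensional complex normed vector space of dimension `p`, `ε > 0` and
`b > 0` with `1 - ε < exp (-b)`. There is a constant `C > 0` (depending only on `b`, `ε`, `V`)
such that for every continuous linear endomorphism `A` of `V` whose eigenvalues all have modulus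
`1` or modulus at most `1 - ε`, and for the projection `P` onto the sum of the generalized
eigenspaces of `A` for eigenvalues of modulus `< 1` along the sum of those for eigenvalues of
modulus `1` (characterized by `P = id` on the former and `P = 0` on the latter), one has
`P ∘ A ^ n = (P ∘ A) ^ n` and `‖P ∘ A ^ n‖ ≤ C * (1 + ‖P ∘ A‖) ^ (p - 1) * exp (-b * n)`
for every `n ≥ 1`. -/
theorem stmt2 (V : Type*) [NormedAddCommGroup V] [NormedSpace ℂ V]
    [FiniteDimensional ℂ V] (p : ℕ) (hp : Module.finrank ℂ V = p)
    (ε b : ℝ) (hε : 0 < ε) (hb : 0 < b) (hbe : 1 - ε < Real.exp (-b)) :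
    ∃ C > (0 : ℝ), ∀ A : V →L[ℂ] V,
      (∀ z ∈ spectrum ℂ A, ‖z‖ = 1 ∨ ‖z‖ ≤ 1 - ε) →
      ∀ P : V →L[ℂ] V,
        (∀ μ : ℂ, ‖μ‖ < 1 →
          ∀ v ∈ Module.End.maxGenEigenspace (A : V →ₗ[ℂ] V) μ, P v = v) →
        (∀ μ : ℂ, ‖μ‖ = 1 →
          ∀ v ∈ Module.End.maxGenEigenspace (A : V →ₗ[ℂ] V) μ, P v = 0) →
        ∀ n : ℕ, 1 ≤ n →
          P * A ^ n = (P * A) ^ n ∧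
          ‖P * A ^ n‖ ≤ C * (1 + ‖P * A‖) ^ (p - 1) * Real.exp (-b * n) := by
  set q := Real.exp (-b) with hq
  set r := max (1 - ε) 0 with hr
  have hr0 : 0 ≤ r := le_max_right _ _
  have hr1 : r ≤ 1 := max_le (by linarith) zero_le_one
  have hrq : r < q := max_lt hbe (Real.exp_pos _)
  have hC := growthConst_nonneg hrq p
  -- the summand `1` only ensures positivity when `p = 0`
  refine ⟨growthConst q r p + 1, by linarith, fun A hA P hP1 hP0 n hn => ?_⟩
  have hPP : P * P = P := by
    refine genEigenspace_induction hε A hA fun μ hμ v hv => ?_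
    rcases hμ with hμ | hμ
    · simp [hP1 μ hμ v hv]
    · simp [hP0 μ hμ v hv]
  have hPA : P * A = A * P := by
    refine genEigenspace_induction hε A hA fun μ hμ v hv => ?_
    have hAv : A v ∈ Module.End.maxGenEigenspace (A : V →ₗ[ℂ] V) μ :=
      Module.End.mapsTo_maxGenEigenspace_of_comm (Commute.refl (A : V →ₗ[ℂ] V)) μ hv
    rcases hμ with hμ | hμ
    · simp [hP1 μ hμ v hv, hP1 μ hμ _ hAv]
    · simp [hP0 μ hμ v hv, hP0 μ hμ _ hAv]
  have hpow := mul_pow_eq_of_comm hPP hPA hn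
  refine ⟨hpow, ?_⟩
  set l := ((P * A : V →L[ℂ] V) : V →ₗ[ℂ] V).charpoly.roots.toList with hl
  have hlen : l.length = p := by
    rw [hl, Multiset.length_toList, ← (IsAlgClosed.splits _).natDegree_eq_card_roots,
      LinearMap.charpoly_natDegree, hp]
  have h1 : ‖(1 : V →L[ℂ] V)‖ ≤ 1 := ContinuousLinearMap.norm_id_le
  have key := norm_mul_pow_le hr0 hr1 hrq h1 (P * A) l
    (fun a ha => norm_root_charpoly_le A P hA hPP hPA hP0 a (Multiset.mem_toList.1 ha)) 1
    (by rw [one_mul]; exact prod_sub_roots_eq_zero (P * A)) n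
  rw [one_mul, hlen] at key
  rw [hpow, show Real.exp (-b * n) = q ^ n by rw [hq, ← Real.exp_nat_mul]; ring_nf]
  refine key.trans ?_
  gcongr
  nlinarith
end

section
/- Let ε, a > 0, let l be a positive integer, and let V be a finite-dimensional complex normed vector space of dimension p. Then there exist constants a′ > 0 and C′ > 0, depending only on ε, a, l and V (in particular independent of the operators below), with the following property. Let A₁, …, A_l be pairwise commuting linear endomorphisms of V such that every eigenvalue of every A_i has modulus at most 1, and such that every eigenvalue of A₁ has either modulus 1 or modulus at most 1 − ε. Let P_{<1} denote the projection of V onto the sum of the generalized eigenspaces of A₁ for eigenvalues of modulus strictly less than 1 along the sum of the generalized eigenspaces of A₁ for eigenvalues of modulus 1. Then for every n = (n₁, …, n_l) ∈ ℤ_{≥0}^l with n₁ > a·(n₁ + ⋯ + n_l), one has ‖P_{<1} ∘ A₁^{n₁} ∘ ⋯ ∘ A_l^{n_l}‖ ≤ C′·(∏_{i=1}^{l} (1 + ‖A_i‖)^p)·e^(−a′·(n₁ + ⋯ + n_l)). -/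
/-!
The exponents of `1 + ‖A i‖` leave no room for bounding `P` and the powers of `A 0` separately,
since `‖P‖` alone can be of order `‖A 0‖ ^ (p - 1)`. Both are handled at once through the linear
recurrences attached to the factors of the characteristic polynomial of `A = A 0`,
namely `S = ∏ (X - μ)` over the roots with `|μ| ≤ 1 - ε` and `N = ∏ (X - ν)` over those with
`|ν| = 1`.

* Cayley-Hamilton gives `S(A) N(A) = 0`, so `A ^ n N(A)` satisfies a recurrence with roots `μ` and
  decays like `r ^ n` for any fixed `r > 1 - ε`, the constant being `O((1 + ‖A‖) ^ p)` because
  `deg S + deg N = p` (`exists_decay_bound`).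
* `N(A) P = N(A)`, so `A ^ n P` is a solution, tending to `0`, of the recurrence with roots `ν` and
  right-hand side `A ^ n N(A)`. Solving backwards from infinity costs only a factor `1 / (1 - r)`
  for each root (`decay_of_decay_unimodular`).

For the other `A i`, `exists_decay_bound` applied to the whole characteristic polynomial gives
`‖A i ^ n‖ ≤ K (1 + ‖A i‖) ^ p exp (δ n)` for any `δ > 0`; taking `δ` small compared with `a` and
`-log r`, the decay in `n 0 > a ‖n‖` dominates.
-/

open Polynomial Filter Topology

/-- The monic polynomial `∏ (X - μ)` whose roots, with multiplicity, are the elements of `s`. -/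
noncomputable def rootPoly (s : Multiset ℂ) : ℂ[X] := (s.map fun μ => X - C μ).prod

lemma rootPoly_cons (μ : ℂ) (s : Multiset ℂ) :
    rootPoly (μ ::ₘ s) = (X - C μ) * rootPoly s := by
  simp [rootPoly]

lemma rootPoly_add (s t : Multiset ℂ) : rootPoly (s + t) = rootPoly s * rootPoly t := by
  simp [rootPoly]

lemma isCoprime_rootPoly (μ : ℂ) (k : ℕ) (s : Multiset ℂ) (h : μ ∉ s) :
    IsCoprime ((X - C μ) ^ k) (rootPoly s) := by
  induction s using Multiset.induction_on with
  | empty => simpa [rootPoly] using isCoprime_one_right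
  | cons ν s ih =>
    rw [rootPoly_cons]
    simp only [Multiset.mem_cons, not_or] at h
    exact IsCoprime.mul_right
      (isCoprime_X_sub_C_of_isUnit_sub (sub_ne_zero.2 h.1).isUnit).pow_left (ih h.2)

/-! ### Estimates in a normed algebra -/

lemma norm_mul_list_prod_le {R : Type*} [NormedRing R] (B : R) (L : List R) :
    ‖B * L.prod‖ ≤ ‖B‖ * (L.map norm).prod := by
  induction L generalizing B with
  | nil => simp
  | cons x L ih =>
    rw [List.prod_cons, List.map_cons, List.prod_cons, ← mul_assoc, ← mul_assoc]
    refine (ih _).trans ?_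
    refine mul_le_mul_of_nonneg_right (norm_mul_le _ _) (List.prod_nonneg fun a ha => ?_)
    obtain ⟨y, -, rfl⟩ := List.mem_map.1 ha
    exact norm_nonneg y

section NormedAlgebra

variable {R : Type*} [NormedRing R] [NormedAlgebra ℂ R]

lemma norm_sub_algebraMap_le (h1 : ‖(1 : R)‖ ≤ 1) (A : R) (μ : ℂ) (hμ : ‖μ‖ ≤ 1) :
    ‖A - algebraMap ℂ R μ‖ ≤ 1 + ‖A‖ := by
  have h : ‖algebraMap ℂ R μ‖ ≤ 1 := by
    rw [norm_algebraMap]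
    exact mul_le_one₀ hμ (norm_nonneg _) h1
  linarith [norm_sub_le A (algebraMap ℂ R μ)]

lemma norm_aeval_rootPoly_le (h1 : ‖(1 : R)‖ ≤ 1) (A : R) (s : Multiset ℂ)
    (hs : ∀ μ ∈ s, ‖μ‖ ≤ 1) : ‖aeval A (rootPoly s)‖ ≤ (1 + ‖A‖) ^ s.card := by
  induction s using Multiset.induction_on with
  | empty => simpa [rootPoly] using h1
  | cons μ s ih =>
    rw [rootPoly_cons, map_mul, Multiset.card_cons, pow_succ']
    refine (norm_mul_le _ _).trans (mul_le_mul ?_ (ih fun ν hν => hs ν (by simp [hν]))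
      (norm_nonneg _) (by positivity))
    simpa using norm_sub_algebraMap_le h1 A μ (hs μ (by simp))

/-- If `∏ (A - μ)` kills `B`, with all `|μ| ≤ ρ < r`, then `A ^ n * B` is `O(r ^ n)` with a
constant polynomial in `‖A‖`. The sequence `A ^ n * B` solves the first-order recurrence
`x (n + 1) = μ * x n + y n`, where `y n = A ^ n * ((A - μ) * B)` has one factor less to kill. -/
lemma exists_decay_bound (h1 : ‖(1 : R)‖ ≤ 1) (ρ r : ℝ) (hρ1 : ρ ≤ 1) (hr : 0 < r) (hρ : ρ < r)
    (m : ℕ) : ∃ K : ℝ, 0 ≤ K ∧ ∀ (A B : R) (s : Multiset ℂ), s.card ≤ m →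
      (∀ μ ∈ s, ‖μ‖ ≤ ρ) → aeval A (rootPoly s) * B = 0 →
      ∀ n : ℕ, ‖A ^ n * B‖ ≤ K * ((1 + ‖A‖) ^ s.card * ‖B‖) * r ^ n := by
  induction m with
  | zero =>
    refine ⟨0, le_rfl, fun A B s hs _ hB n => ?_⟩
    obtain rfl : s = 0 := by simpa using hs
    have : B = 0 := by simpa [rootPoly] using hB
    simp [this]
  | succ m ih =>
    obtain ⟨K, hK, H⟩ := ih
    have hd : 0 < r - ρ := sub_pos.2 hρ
    refine ⟨1 + K / (r - ρ), by positivity, fun A B s hs hμ hB => ?_⟩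
    induction s using Multiset.induction_on with
    | empty =>
      have : B = 0 := by simpa [rootPoly] using hB
      simp [this]
    | cons μ s _ =>
      have hμρ : ‖μ‖ ≤ ρ := hμ μ (by simp)
      rw [rootPoly_cons, mul_comm, map_mul, mul_assoc] at hB
      have hs' : s.card ≤ m := by simpa using hs
      have key := H A _ s hs' (fun ν hν => hμ ν (by simp [hν])) hB
      have hX : aeval A (X - C μ : ℂ[X]) = A - algebraMap ℂ R μ := by simp
      rw [hX] at key
      have hB' : ‖(A - algebraMap ℂ R μ) * B‖ ≤ (1 + ‖A‖) * ‖B‖ :=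
        (norm_mul_le _ _).trans (mul_le_mul_of_nonneg_right
          (norm_sub_algebraMap_le h1 A μ (hμρ.trans hρ1)) (norm_nonneg _))
      set M : ℝ := (1 + ‖A‖) ^ (μ ::ₘ s).card * ‖B‖ with hM
      have hM0 : 0 ≤ M := by positivity
      have hstep : ∀ n, ‖A ^ n * ((A - algebraMap ℂ R μ) * B)‖ ≤ K * M * r ^ n := by
        intro n
        refine (key n).trans ?_
        have : (1 + ‖A‖) ^ s.card * ‖(A - algebraMap ℂ R μ) * B‖ ≤ M := by
          rw [hM, Multiset.card_cons, pow_succ, mul_assoc]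
          gcongr
        gcongr
      intro n
      induction n with
      | zero =>
        have : ‖B‖ ≤ M := le_mul_of_one_le_left (norm_nonneg _)
          (one_le_pow₀ (by linarith [norm_nonneg A]))
        have h2 : 0 ≤ K / (r - ρ) * M := by positivity
        simp only [pow_zero, one_mul, mul_one]
        linarith
      | succ n ihn =>
        have e : A ^ (n + 1) * B = μ • (A ^ n * B) + A ^ n * ((A - algebraMap ℂ R μ) * B) := by
          rw [sub_mul, mul_sub, ← Algebra.smul_def, mul_smul_comm, pow_succ, mul_assoc]
          abel
        have h2 : ‖A ^ (n + 1) * B‖ ≤ ρ * ‖A ^ n * B‖ + K * M * r ^ n := by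
          rw [e]
          refine (norm_add_le _ _).trans (add_le_add ?_ (hstep n))
          rw [norm_smul]
          gcongr
        have hρ0 : 0 ≤ ρ := (norm_nonneg μ).trans hμρ
        have h3 : ρ * ‖A ^ n * B‖ ≤ ρ * ((1 + K / (r - ρ)) * M * r ^ n) := by gcongr
        have h4 : K = K / (r - ρ) * (r - ρ) := by field_simp
        have h5 : 0 ≤ (r - ρ) * M * r ^ n := by positivity
        rw [pow_succ r]
        calc _ ≤ ρ * ((1 + K / (r - ρ)) * M * r ^ n) + K * M * r ^ n := by linarith
          _ = (1 + K / (r - ρ)) * M * (r ^ n * r) - (r - ρ) * M * r ^ n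
              + (K - K / (r - ρ) * (r - ρ)) * M * r ^ n := by ring
          _ ≤ _ := by rw [← h4]; linarith

/-- Solving the recurrence backwards: if `A ^ n * X` tends to `0`, then a geometric bound for
`A ^ n * (∏ (A - ν) * X)` with all `|ν| = 1` gives one for `A ^ n * X`. For a single factor,
`‖x n‖ ≤ ‖x (n + 1)‖ + c * r ^ n` says that `‖x n‖ - c * r ^ n / (1 - r)` is monotone,
and its limit is `0`. -/
lemma decay_of_decay_unimodular (r : ℝ) (hr : 0 < r) (hr1 : r < 1) (A : R) (c : ℝ)
    (s : Multiset ℂ) (hs : ∀ ν ∈ s, ‖ν‖ = 1) (Y : R)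
    (h0 : Tendsto (fun n : ℕ => A ^ n * Y) atTop (𝓝 0))
    (hY : ∀ n : ℕ, ‖A ^ n * (aeval A (rootPoly s) * Y)‖ ≤ c * r ^ n) (n : ℕ) :
    ‖A ^ n * Y‖ ≤ c / (1 - r) ^ s.card * r ^ n := by
  induction s using Multiset.induction_on generalizing Y n with
  | empty => simpa [rootPoly] using hY n
  | cons ν s ih =>
    have e : ∀ n : ℕ, A ^ n * (aeval A (X - C ν) * Y) = A ^ (n + 1) * Y - ν • (A ^ n * Y) := by
      intro n
      simp only [map_sub, aeval_X, aeval_C]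
      rw [sub_mul, mul_sub, ← Algebra.smul_def, mul_smul_comm, pow_succ, mul_assoc]
    have h0' : Tendsto (fun n : ℕ => A ^ n * (aeval A (X - C ν) * Y)) atTop (𝓝 0) := by
      simp only [e]
      simpa using ((tendsto_add_atTop_iff_nat 1).2 h0).sub (h0.const_smul ν)
    have ih' := ih (fun ν' h => hs ν' (by simp [h])) _ h0' (fun n => by
      have := hY n
      rwa [rootPoly_cons, mul_comm, map_mul, mul_assoc] at this)
    set d := c / (1 - r) ^ s.card
    have h1r : 0 < 1 - r := by linarith
    have hd : c / (1 - r) ^ (ν ::ₘ s).card = d / (1 - r) := by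
      rw [Multiset.card_cons, pow_succ, div_div]
    rw [hd]
    have hmono : Monotone fun n : ℕ => ‖A ^ n * Y‖ - d / (1 - r) * r ^ n := by
      refine monotone_nat_of_le_succ fun n => ?_
      have h2 := ih' n
      rw [e] at h2
      have h3 : ‖ν • (A ^ n * Y)‖ = ‖A ^ n * Y‖ := by
        rw [norm_smul, hs ν (by simp), one_mul]
      have h4 := norm_sub_norm_le (ν • (A ^ n * Y)) (A ^ (n + 1) * Y)
      rw [norm_sub_rev, h3] at h4
      have h5 : d / (1 - r) * r ^ n - d / (1 - r) * r ^ (n + 1) = d * r ^ n := by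
        field_simp
        ring
      linarith
    have hlim : Tendsto (fun n : ℕ => ‖A ^ n * Y‖ - d / (1 - r) * r ^ n) atTop (𝓝 0) := by
      simpa using h0.norm.sub
        ((tendsto_pow_atTop_nhds_zero_of_lt_one hr.le hr1).const_mul (d / (1 - r)))
    linarith [hmono.ge_of_tendsto hlim n]

end NormedAlgebra

/-! ### The spectral projection -/

/-- A generalized eigenvector for `μ` killed by `∏ (f - ν)`, where no `ν` equals `μ`,
is zero: `(X - μ) ^ k` and `∏ (X - ν)` are coprime. -/
lemma eq_zero_of_aeval_rootPoly {V : Type*} [AddCommGroup V] [Module ℂ V]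
    (f : V →ₗ[ℂ] V) (μ : ℂ) (s : Multiset ℂ) (h : μ ∉ s) (v : V)
    (hv : v ∈ Module.End.maxGenEigenspace f μ) (hs : aeval f (rootPoly s) v = 0) : v = 0 := by
  obtain ⟨k, hk⟩ := (Module.End.mem_maxGenEigenspace f μ v).1 hv
  obtain ⟨a, b, hab⟩ := isCoprime_rootPoly μ k s h
  have h2 := congrArg (fun q => aeval f q v) hab
  have h3 : aeval f ((X - C μ) ^ k : ℂ[X]) v = 0 := by
    simpa [Algebra.algebraMap_eq_smul_one] using hk
  simp only [map_add, map_mul, LinearMap.add_apply, Module.End.mul_apply, h3, hs, map_zero,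
    add_zero, map_one, Module.End.one_apply] at h2
  exact h2.symm

lemma aeval_mem_maxGenEigenspace {V : Type*} [AddCommGroup V] [Module ℂ V] (f : V →ₗ[ℂ] V)
    (μ : ℂ) (q : ℂ[X]) (v : V)
    (hv : v ∈ Module.End.maxGenEigenspace f μ) :
    aeval f q v ∈ Module.End.maxGenEigenspace f μ := by
  refine Module.End.mapsTo_maxGenEigenspace_of_comm ?_ μ hv
  have := (Commute.all (X : ℂ[X]) q).map (aeval f)
  simpa using this

section Projection

variable {V : Type*} [NormedAddCommGroup V] [NormedSpace ℂ V] [FiniteDimensional ℂ V]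

lemma coe_aeval (A : V →L[ℂ] V) (q : ℂ[X]) :
    ((aeval A q : V →L[ℂ] V) : V →ₗ[ℂ] V) = aeval (A : V →ₗ[ℂ] V) q :=
  (aeval_algHom_apply (Module.End.toContinuousLinearMap (𝕜 := ℂ) V).symm.toAlgHom A q).symm

lemma ext_maxGenEigenspace (f : V →ₗ[ℂ] V) (g h : V →L[ℂ] V)
    (H : ∀ μ, ∀ v ∈ Module.End.maxGenEigenspace f μ, g v = h v) : g = h := by
  ext v
  have hv : v ∈ ⨆ μ, Module.End.maxGenEigenspace f μ := by
    rw [Module.End.iSup_maxGenEigenspace_eq_top]; trivial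
  refine Submodule.iSup_induction _ (motive := fun v => g v = h v) hv H (by simp) ?_
  intro x y hx hy
  simp [hx, hy]

/-- The characteristic polynomial of `A` splits as `∏ (X - μ) * ∏ (X - ν)` with `μ` running
over `s` (the roots of modulus `< 1`) and `ν` over `t` (those of modulus `1`). The projection
`P` commutes with `A`; the first factor at `A` kills `P`, the second one kills `1 - P`. -/
lemma exists_root_split (ε : ℝ) (A P : V →L[ℂ] V) (hε : 0 < ε)
    (hA : ∀ z ∈ spectrum ℂ A, ‖z‖ = 1 ∨ ‖z‖ ≤ 1 - ε)
    (hP : ∀ μ : ℂ, ‖μ‖ < 1 → ∀ v ∈ Module.End.maxGenEigenspace (A : V →ₗ[ℂ] V) μ, P v = v)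
    (hP' : ∀ μ : ℂ, ‖μ‖ = 1 → ∀ v ∈ Module.End.maxGenEigenspace (A : V →ₗ[ℂ] V) μ, P v = 0) :
    ∃ s t : Multiset ℂ, s.card + t.card = Module.finrank ℂ V ∧ (∀ μ ∈ s, ‖μ‖ ≤ 1 - ε) ∧
      (∀ ν ∈ t, ‖ν‖ = 1) ∧ Commute P A ∧ aeval A (rootPoly (s + t)) = 0 ∧
      aeval A (rootPoly s) * P = 0 ∧ aeval A (rootPoly t) * P = aeval A (rootPoly t) := by
  classical
  set f : V →ₗ[ℂ] V := (A : V →ₗ[ℂ] V) with hf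
  have hsplit := IsAlgClosed.splits f.charpoly
  have hmon := f.charpoly_monic
  have hroots : ∀ z ∈ f.charpoly.roots, ‖z‖ = 1 ∨ ‖z‖ ≤ 1 - ε := by
    intro z hz
    refine hA z ?_
    rw [ContinuousLinearMap.spectrum_eq]
    exact (Module.End.mem_spectrum_iff_isRoot_charpoly f z).2 (isRoot_of_mem_roots hz)
  set s := f.charpoly.roots.filter fun z => ‖z‖ < 1 with hs
  set t := f.charpoly.roots.filter fun z => ¬ ‖z‖ < 1 with ht
  have hst : s + t = f.charpoly.roots := Multiset.filter_add_not _ _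
  have hpoly : rootPoly (s + t) = f.charpoly := by
    rw [hst]; exact (hsplit.eq_prod_roots_of_monic hmon).symm
  have hs1 : ∀ μ ∈ s, ‖μ‖ ≤ 1 - ε := by
    intro μ hμ
    rw [hs, Multiset.mem_filter] at hμ
    rcases hroots μ hμ.1 with h | h
    · linarith [hμ.2]
    · exact h
  have ht1 : ∀ ν ∈ t, ‖ν‖ = 1 := by
    intro μ hμ
    rw [ht, Multiset.mem_filter] at hμ
    rcases hroots μ hμ.1 with h | h
    · exact h
    · linarith [hμ.2]
  have hzero : aeval f (rootPoly (s + t)) = 0 := by rw [hpoly]; exact f.aeval_self_charpoly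
  have hbig : ∀ μ, ¬ ‖μ‖ < 1 → ‖μ‖ ≠ 1 → ∀ v ∈ Module.End.maxGenEigenspace f μ, v = 0 := by
    intro μ h1 h2 v hv
    refine eq_zero_of_aeval_rootPoly f μ (s + t) ?_ v hv (by rw [hzero]; rfl)
    rw [Multiset.mem_add, not_or]
    exact ⟨fun h => by linarith [hs1 μ h], fun h => h2 (ht1 μ h)⟩
  have app : ∀ q v, aeval A q v = aeval f q v := fun q v => by rw [hf, ← coe_aeval]; rfl
  refine ⟨s, t, ?_, hs1, ht1, ?_, ?_, ?_, ?_⟩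
  · rw [← Multiset.card_add, hst, ← hsplit.natDegree_eq_card_roots, f.charpoly_natDegree]
  · refine ext_maxGenEigenspace f _ _ fun μ v hv => ?_
    have hAv : A v ∈ Module.End.maxGenEigenspace f μ := by
      have := aeval_mem_maxGenEigenspace f μ X v hv
      rwa [aeval_X] at this
    simp only [mul_apply_eq_comp]
    by_cases h1 : ‖μ‖ < 1
    · rw [hP μ h1 v hv, hP μ h1 _ hAv]
    · by_cases h2 : ‖μ‖ = 1
      · rw [hP' μ h2 v hv, hP' μ h2 _ hAv, map_zero]
      · simp [hbig μ h1 h2 v hv]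
  · ext v
    rw [app, hzero]; rfl
  · refine ext_maxGenEigenspace f _ _ fun μ v hv => ?_
    simp only [mul_apply_eq_comp, zero_apply]
    by_cases h1 : ‖μ‖ < 1
    · rw [hP μ h1 v hv, app]
      refine eq_zero_of_aeval_rootPoly f μ t (fun h => by linarith [ht1 μ h]) _
        (aeval_mem_maxGenEigenspace f μ _ v hv) ?_
      rw [← Module.End.mul_apply, ← map_mul, mul_comm, ← rootPoly_add, hzero]; rfl
    · by_cases h2 : ‖μ‖ = 1
      · rw [hP' μ h2 v hv, map_zero]
      · simp [hbig μ h1 h2 v hv]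
  · refine ext_maxGenEigenspace f _ _ fun μ v hv => ?_
    simp only [mul_apply_eq_comp]
    by_cases h1 : ‖μ‖ < 1
    · rw [hP μ h1 v hv]
    · by_cases h2 : ‖μ‖ = 1
      · rw [hP' μ h2 v hv, map_zero, app]
        refine (eq_zero_of_aeval_rootPoly f μ s (fun h => by linarith [hs1 μ h]) _
          (aeval_mem_maxGenEigenspace f μ _ v hv) ?_).symm
        rw [← Module.End.mul_apply, ← map_mul, ← rootPoly_add, hzero]; rfl
      · simp [hbig μ h1 h2 v hv]

end Projection

/-! ### Bounds for the powers -/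

section Powers

variable (V : Type*) [NormedAddCommGroup V] [NormedSpace ℂ V] [FiniteDimensional ℂ V]

/-- Powers of operators with spectrum in the closed unit disc grow subexponentially, with
a constant that is uniform up to the factor `(1 + ‖A‖) ^ dim V`. -/
lemma exists_pow_bound (δ : ℝ) (hδ : 0 < δ) : ∃ K : ℝ, 1 ≤ K ∧ ∀ A : V →L[ℂ] V,
    (∀ z ∈ spectrum ℂ A, ‖z‖ ≤ 1) → ∀ n : ℕ,
      ‖A ^ n‖ ≤ K * (1 + ‖A‖) ^ Module.finrank ℂ V * Real.exp (δ * n) := by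
  have h1 : ‖(1 : V →L[ℂ] V)‖ ≤ 1 := ContinuousLinearMap.norm_id_le
  obtain ⟨K, hK, H⟩ := exists_decay_bound h1 1 (Real.exp δ) le_rfl (Real.exp_pos δ)
    (Real.one_lt_exp_iff.2 hδ) (Module.finrank ℂ V)
  refine ⟨max K 1, le_max_right _ _, fun A hA n => ?_⟩
  set f : V →ₗ[ℂ] V := (A : V →ₗ[ℂ] V) with hf
  have hsplit := IsAlgClosed.splits f.charpoly
  have hcard : f.charpoly.roots.card = Module.finrank ℂ V := by
    rw [← hsplit.natDegree_eq_card_roots, f.charpoly_natDegree]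
  have h := H A 1 f.charpoly.roots hcard.le (fun z hz => hA z (by
      rw [ContinuousLinearMap.spectrum_eq]
      exact (Module.End.mem_spectrum_iff_isRoot_charpoly f z).2 (isRoot_of_mem_roots hz))) (by
    have hp : rootPoly f.charpoly.roots = f.charpoly :=
      (hsplit.eq_prod_roots_of_monic f.charpoly_monic).symm
    rw [mul_one, hp]
    ext v
    have : aeval A f.charpoly v = aeval f f.charpoly v := by rw [hf, ← coe_aeval]; rfl
    rw [this, f.aeval_self_charpoly]; rfl) n
  rw [mul_one, hcard] at h
  rw [mul_comm δ, Real.exp_nat_mul]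
  refine h.trans ?_
  have h2 : (1 + ‖A‖) ^ Module.finrank ℂ V * ‖(1 : V →L[ℂ] V)‖
      ≤ (1 + ‖A‖) ^ Module.finrank ℂ V := mul_le_of_le_one_right (by positivity) h1
  gcongr
  exact le_max_left _ _

/-- Exponential decay of `P * A ^ n`. The two factors of the characteristic polynomial have
total degree `dim V`, whence the exponent of `1 + ‖A‖`; the norm of `P` enters only
qualitatively, to know that `A ^ n * P` tends to `0`. -/
lemma exists_proj_pow_bound (ε : ℝ) (hε : 0 < ε) : ∃ r : ℝ, 0 < r ∧ r < 1 ∧ ∃ K : ℝ, 0 ≤ K ∧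
    ∀ A P : V →L[ℂ] V, (∀ z ∈ spectrum ℂ A, ‖z‖ = 1 ∨ ‖z‖ ≤ 1 - ε) →
      (∀ μ : ℂ, ‖μ‖ < 1 → ∀ v ∈ Module.End.maxGenEigenspace (A : V →ₗ[ℂ] V) μ, P v = v) →
      (∀ μ : ℂ, ‖μ‖ = 1 → ∀ v ∈ Module.End.maxGenEigenspace (A : V →ₗ[ℂ] V) μ, P v = 0) →
      ∀ n : ℕ, ‖P * A ^ n‖ ≤ K * (1 + ‖A‖) ^ Module.finrank ℂ V * r ^ n := by
  have h1 : ‖(1 : V →L[ℂ] V)‖ ≤ 1 := ContinuousLinearMap.norm_id_le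
  set p := Module.finrank ℂ V with hp
  set r : ℝ := max (1 - ε / 2) (1 / 2) with hr
  have hr0 : 0 < r := lt_max_of_lt_right (by norm_num)
  have hr1 : r < 1 := max_lt (by linarith) (by norm_num)
  obtain ⟨K, hK, H⟩ := exists_decay_bound h1 (1 - ε) r (by linarith) hr0
    (lt_max_of_lt_left (by linarith)) p
  have h1r : 0 < 1 - r := by linarith
  refine ⟨r, hr0, hr1, K / (1 - r) ^ p, by positivity, fun A P hA hP hP' n => ?_⟩
  obtain ⟨s, t, hst, hs, ht, hcomm, h0, hsP, htP⟩ := exists_root_split ε A P hε hA hP hP'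
  have hlim : Tendsto (fun n : ℕ => A ^ n * P) atTop (𝓝 0) := by
    refine squeeze_zero_norm (H A P s (by omega) hs hsP) ?_
    simpa using (tendsto_pow_atTop_nhds_zero_of_lt_one hr0.le hr1).const_mul
      (K * ((1 + ‖A‖) ^ s.card * ‖P‖))
  have hN : ∀ n : ℕ, ‖A ^ n * (aeval A (rootPoly t) * P)‖ ≤ K * (1 + ‖A‖) ^ p * r ^ n := by
    intro n
    rw [htP]
    refine (H A _ s (by omega) hs (by rw [← map_mul, ← rootPoly_add, h0]) n).trans ?_
    have := norm_aeval_rootPoly_le h1 A t fun ν h => (ht ν h).le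
    rw [hp, ← hst, pow_add]
    gcongr
  rw [(hcomm.pow_right n).eq]
  refine (decay_of_decay_unimodular r hr0 hr1 A _ t ht P hlim hN n).trans ?_
  rw [mul_div_right_comm]
  have : (1 - r) ^ p ≤ (1 - r) ^ t.card := pow_le_pow_of_le_one h1r.le (by linarith) (by omega)
  gcongr

end Powers


/-- Let `ε, a > 0`, `l ≥ 1`, and let `V` be a finite-dimensional complex normed vector space of
dimension `p`. There exist `a' > 0` and `C' > 0` (depending only on `ε`, `a`, `l`, `V`) such
that for all pairwise commuting endomorphisms `A 0, …, A (l-1)` of `V` whose eigenvalues all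
have modulus at most `1`, with the eigenvalues of `A 0` of modulus `1` or at most `1 - ε`, and
for the projection `P` onto the sum of the generalized eigenspaces of `A 0` for eigenvalues of
modulus `< 1` along the sum of those of modulus `1`, one has, for every `n : Fin l → ℕ` with
`n 0 > a * (n 0 + ⋯ + n (l-1))`:
`‖P ∘ A 0 ^ (n 0) ∘ ⋯ ∘ A (l-1) ^ (n (l-1))‖
  ≤ C' * (∏ i, (1 + ‖A i‖) ^ p) * exp (-a' * (n 0 + ⋯ + n (l-1)))`. -/
theorem stmt4 (ε a : ℝ) (hε : 0 < ε) (ha : 0 < a) (l : ℕ) (hl : 0 < l)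
    (V : Type*) [NormedAddCommGroup V] [NormedSpace ℂ V] [FiniteDimensional ℂ V]
    (p : ℕ) (hp : Module.finrank ℂ V = p) :
    ∃ a' > (0 : ℝ), ∃ C' > (0 : ℝ), ∀ A : Fin l → (V →L[ℂ] V),
      (∀ i j, Commute (A i) (A j)) →
      (∀ i, ∀ z ∈ spectrum ℂ (A i), ‖z‖ ≤ 1) →
      (∀ z ∈ spectrum ℂ (A ⟨0, hl⟩), ‖z‖ = 1 ∨ ‖z‖ ≤ 1 - ε) →
      ∀ P : V →L[ℂ] V,
        (∀ μ : ℂ, ‖μ‖ < 1 →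
          ∀ v ∈ Module.End.maxGenEigenspace ((A ⟨0, hl⟩) : V →ₗ[ℂ] V) μ, P v = v) →
        (∀ μ : ℂ, ‖μ‖ = 1 →
          ∀ v ∈ Module.End.maxGenEigenspace ((A ⟨0, hl⟩) : V →ₗ[ℂ] V) μ, P v = 0) →
        ∀ n : Fin l → ℕ, a * (∑ i, (n i : ℝ)) < (n ⟨0, hl⟩ : ℝ) →
          ‖P * (List.ofFn fun i => (A i) ^ (n i)).prod‖ ≤
            C' * (∏ i, (1 + ‖A i‖) ^ p) * Real.exp (-a' * (∑ i, (n i : ℝ))) := by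
  subst hp
  obtain ⟨r, hr0, hr1, K, hK, HK⟩ := exists_proj_pow_bound V ε hε
  set b : ℝ := -Real.log r with hb
  have hb0 : 0 < b := neg_pos.2 (Real.log_neg hr0 hr1)
  -- `P * A 0 ^ n 0` gains `exp (-b * a * ‖n‖)`; the other factors may lose half of it.
  set δ : ℝ := a * b / 2 with hδ
  have hδ0 : 0 < δ := by positivity
  obtain ⟨D, hD, HD⟩ := exists_pow_bound V δ hδ0
  obtain ⟨m, rfl⟩ : ∃ m, l = m + 1 := ⟨l - 1, by omega⟩
  refine ⟨δ, hδ0, (K + 1) * D ^ m, by positivity, fun A _ hA hA0 P hP hP' n hn => ?_⟩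
  have hz : (⟨0, hl⟩ : Fin (m + 1)) = 0 := rfl
  rw [hz] at hA0 hP hP' hn
  set d := Module.finrank ℂ V
  rw [List.ofFn_succ, List.prod_cons, ← mul_assoc]
  refine (norm_mul_list_prod_le _ _).trans ?_
  rw [List.map_ofFn, List.prod_ofFn]
  have hfst := HK (A 0) P hA0 hP hP' (n 0)
  have hrest : ∏ i : Fin m, ‖A i.succ ^ n i.succ‖ ≤
      ∏ i : Fin m, (D * (1 + ‖A i.succ‖) ^ d * Real.exp (δ * n i.succ)) :=
    Finset.prod_le_prod (fun _ _ => norm_nonneg _) fun i _ => HD _ (hA _) _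
  rw [Finset.prod_mul_distrib, Finset.prod_mul_distrib, Finset.prod_const, Finset.card_univ,
    Fintype.card_fin, ← Real.exp_sum, ← Finset.mul_sum] at hrest
  rw [Fin.prod_univ_succ]
  set S : ℝ := ∑ i : Fin m, (n i.succ : ℝ)
  rw [Fin.sum_univ_succ] at hn ⊢
  have hexp : r ^ n 0 * Real.exp (δ * S) ≤ Real.exp (-δ * (n 0 + S)) := by
    have : r ^ n 0 = Real.exp (-b * n 0) := by
      rw [hb, neg_neg, mul_comm, Real.exp_nat_mul, Real.exp_log hr0]
    rw [this, ← Real.exp_add, Real.exp_le_exp]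
    have h1 : b * (a * (n 0 + S)) ≤ b * n 0 := by gcongr
    have h2 : 0 ≤ δ * n 0 := by positivity
    have h3 : b * (a * (n 0 + S)) = 2 * δ * (n 0 + S) := by rw [hδ]; ring
    nlinarith
  calc _ ≤ (K * (1 + ‖A 0‖) ^ d * r ^ n 0) *
        (D ^ m * (∏ i : Fin m, (1 + ‖A i.succ‖) ^ d) * Real.exp (δ * S)) :=
        mul_le_mul hfst hrest (Finset.prod_nonneg fun _ _ => norm_nonneg _) (by positivity)
    _ = (K * D ^ m) * ((1 + ‖A 0‖) ^ d * ∏ i : Fin m, (1 + ‖A i.succ‖) ^ d) *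
        (r ^ n 0 * Real.exp (δ * S)) := by ring
    _ ≤ _ := by
        gcongr
        linarith
end

section
/- Let V be a finite-dimensional complex vector space, let ρ : ℤ^l → GL(V) be a group homomorphism, and let φ be a linear functional on V and v ∈ V. Then there exist a finite set ε of characters of ℤ^l (group homomorphisms t : ℤ^l → ℂˣ) and, for each t ∈ ε, a polynomial function E_t : ℤ^l → ℂ of total degree at most dim V − 1, such that φ(ρ(x)(v)) = Σ_{t ∈ ε} E_t(x)·t(x) for every x ∈ ℤ^l. -/
/-!
The commuting operators `A i = ρ (e i)` decompose `V` into joint generalised eigenspaces, and the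
claim is additive in `v`, so `v` may be taken in one of them, with eigenvalues `χ i ≠ 0`. There
`N i = A i - χ i` are commuting nilpotent operators, and the integer binomial theorem
`A ^ m = ∑ k, χ ^ (m - k) * (m choose k) • N ^ k` (`zpow_apply_eq_sum`) exhibits
`φ (ρ x v)` as `∏ i, χ i ^ x i` times a linear combination of the polynomials `∏ i, (x i choose k i)`
of degree `∑ i, k i`, with coefficients `φ (∏ i, N i ^ k i v)`.

The degree bound holds because every product of `dim V` of the `N i` kills the joint generalised
eigenspace: applying some `N i` to a nonzero subspace invariant under all of them strictly lowers
its dimension (`killed_of_finrank_le`). The expansion over the coordinates is organised as an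
induction on the set of coordinates (`exists_poly_of_killed`).
-/

open Module

/-- `Killed N d v`: every product of `d` operators of the family `N`, repetitions allowed,
sends `v` to zero. -/
def Killed {ι V : Type*} [AddCommGroup V] [Module ℂ V] (N : ι → End ℂ V) : ℕ → V → Prop
  | 0, v => v = 0
  | d + 1, v => ∀ i, Killed N d (N i v)

section Killed

variable {ι V : Type*} [AddCommGroup V] [Module ℂ V] {N : ι → End ℂ V}

lemma Killed.pow_apply {d k : ℕ} {v : V} (h : Killed N (d + k) v) (i : ι) :
    Killed N d ((N i ^ k) v) := by
  induction k generalizing v with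
  | zero => simpa using h
  | succ k ih =>
    rw [pow_succ, Module.End.mul_apply]
    exact ih (h i)

/-- A nilpotent operator strictly shrinks every nonzero invariant subspace, so products of length
`finrank R` of commuting nilpotent operators vanish on an invariant subspace `R`. -/
lemma killed_of_finrank_le [FiniteDimensional ℂ V] (hN : ∀ i j, Commute (N i) (N j)) {n d : ℕ}
    (R : Submodule ℂ V) (hinv : ∀ i, R.map (N i) ≤ R) (hnil : ∀ i, ∀ v ∈ R, (N i ^ n) v = 0)
    (hd : finrank ℂ R ≤ d) {v : V} (hv : v ∈ R) : Killed N d v := by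
  induction d generalizing R v with
  | zero =>
    have hR : R = ⊥ := Submodule.finrank_eq_zero.mp (Nat.le_zero.mp hd)
    subst hR
    exact (Submodule.mem_bot ℂ).mp hv
  | succ d ih =>
    intro i
    refine ih (R.map (N i)) (fun j => ?_) (fun j w hw => hnil j w (hinv i hw)) ?_
      (Submodule.mem_map_of_mem hv)
    · rintro _ ⟨_, ⟨u, hu, rfl⟩, rfl⟩
      refine ⟨N j u, hinv j (Submodule.mem_map_of_mem hu), ?_⟩
      exact LinearMap.congr_fun (hN i j).eq u
    · by_cases heq : R.map (N i) = R
      · have hpow : ∀ k : ℕ, R.map (N i ^ k) = R := by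
          intro k
          induction k with
          | zero => simp [Module.End.one_eq_id]
          | succ k ihk => rw [pow_succ, Module.End.mul_eq_comp, Submodule.map_comp, heq, ihk]
        have hR : R = ⊥ := by
          rw [← hpow n, eq_bot_iff]
          rintro _ ⟨u, hu, rfl⟩
          exact (Submodule.mem_bot ℂ).mpr (hnil i u hu)
        rw [heq, hR, finrank_bot]
        exact Nat.zero_le d
      · have := Submodule.finrank_lt_finrank_of_lt (lt_of_le_of_ne (hinv i) heq)
        omega

end Killed

/-- The binomial expansion of `A ^ m = (χ + (A - χ)) ^ m` for an integer exponent `m`, on a vector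
killed by a power of `A - χ`. -/
lemma zpow_apply_eq_sum {V : Type*} [AddCommGroup V] [Module ℂ V] (A : (End ℂ V)ˣ)
    (χ : ℂˣ) (N : End ℂ V) (hN : N = (A : End ℂ V) - algebraMap ℂ _ (χ : ℂ)) (d : ℕ) (v : V)
    (hv : (N ^ (d + 1)) v = 0) (m : ℤ) :
    ((A ^ m : (End ℂ V)ˣ) : End ℂ V) v =
      ∑ k ∈ Finset.range (d + 1),
        (((χ ^ (m - k) : ℂˣ) : ℂ) * Ring.choose (m : ℂ) k) • (N ^ k) v := by
  set F : ℤ → V := fun m => ∑ k ∈ Finset.range (d + 1),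
        (((χ ^ (m - k) : ℂˣ) : ℂ) * Ring.choose (m : ℂ) k) • (N ^ k) v with hF
  have hA : ∀ w, (A : End ℂ V) w = (χ : ℂ) • w + N w := by
    intro w
    simp [hN, Module.algebraMap_end_apply]
  -- Pascal's rule: the right-hand side satisfies the same recursion in `m` as the left-hand side.
  have hstep : ∀ m, (A : End ℂ V) (F m) = F (m + 1) := by
    intro m
    rw [hA]
    simp only [hF, map_sum, map_smul, Finset.smul_sum]
    have h1 : ∀ k : ℕ, N ((N ^ k) v) = (N ^ (k + 1)) v := by
      intro k
      rw [pow_succ', Module.End.mul_apply]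
    simp only [h1]
    rw [Finset.sum_range_succ (fun k => _ • (N ^ (k + 1)) v), hv, smul_zero, add_zero,
      Finset.sum_range_succ', Finset.sum_range_succ' _ d, add_right_comm,
      ← Finset.sum_add_distrib]
    congr 1
    · refine Finset.sum_congr rfl fun k _ => ?_
      rw [smul_smul, ← add_smul]
      congr 1
      have e1 : m + 1 - ((k + 1 : ℕ) : ℤ) = m - k := by push_cast; ring
      have e2 : m - (k : ℤ) = 1 + (m - ((k + 1 : ℕ) : ℤ)) := by push_cast; ring
      rw [e1, e2, zpow_add, zpow_one, Units.val_mul, Int.cast_add, Int.cast_one,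
        Ring.choose_succ_succ]
      ring
    · rw [smul_smul]
      congr 1
      simp only [Nat.cast_zero, sub_zero, Ring.choose_zero_right, mul_one]
      rw [add_comm m 1, zpow_add, zpow_one, Units.val_mul]
  have h0 : F 0 = v := by
    simp only [hF]
    rw [Finset.sum_eq_single 0]
    · simp
    · intro k _ hk
      obtain ⟨k, rfl⟩ := Nat.exists_eq_succ_of_ne_zero hk
      simp [Ring.choose_zero_succ]
    · simp
  change _ = F m
  induction m with
  | zero => simp [h0]
  | succ n ih => rw [add_comm, zpow_add, zpow_one, Units.val_mul, Module.End.mul_apply, ih, hstep,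
      add_comm]
  | pred n ih =>
    have h2 := hstep (-(n : ℤ) - 1)
    rw [sub_add_cancel, ← ih] at h2
    rw [sub_eq_add_neg, add_comm, zpow_add, zpow_neg_one, Units.val_mul, Module.End.mul_apply,
      ← h2, ← Module.End.mul_apply, Units.inv_mul, Module.End.one_apply, sub_eq_add_neg, add_comm]

/-- The binomial coefficient `(x j choose k)` is a polynomial in `x` of total degree at most `k`. -/
lemma exists_choose_poly {σ : Type*} (j : σ) (k : ℕ) :
    ∃ q : MvPolynomial σ ℂ, q.totalDegree ≤ k ∧
      ∀ x : σ → ℂ, MvPolynomial.eval x q = Ring.choose (x j) k := by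
  refine ⟨MvPolynomial.C ((k.factorial : ℂ)⁻¹) *
    Polynomial.aeval (MvPolynomial.X j) (descPochhammer ℂ k), ?_, fun x => ?_⟩
  · refine (MvPolynomial.totalDegree_mul _ _).trans ?_
    rw [MvPolynomial.totalDegree_C, zero_add, Polynomial.aeval_eq_sum_range,
      descPochhammer_natDegree]
    refine (MvPolynomial.totalDegree_finsetSum _ _).trans (Finset.sup_le fun i hi => ?_)
    refine (MvPolynomial.totalDegree_smul_le _ _).trans ?_
    rw [MvPolynomial.totalDegree_X_pow]
    exact Nat.lt_succ_iff.mp (Finset.mem_range.mp hi)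
  · rw [Ring.choose_eq_smul, map_mul, MvPolynomial.eval_C, smul_eq_mul]
    congr 1
    rw [← MvPolynomial.coe_aeval_eq_eval, RingHom.coe_coe, ← Polynomial.aeval_algHom_apply,
      MvPolynomial.aeval_X, ← descPochhammer_map (algebraMap ℤ ℂ), Polynomial.aeval_map_algebraMap,
      Polynomial.aeval_eq_smeval]

section Rep

variable {l : ℕ} {V : Type*} [AddCommGroup V] [Module ℂ V]

/-- The `i`-th standard generator of `ℤ^l`, written multiplicatively. -/
def stdGen (i : Fin l) : Multiplicative (Fin l → ℤ) := Multiplicative.ofAdd (Pi.single i 1)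

lemma ofAdd_eq_prod (x : Fin l → ℤ) :
    Multiplicative.ofAdd x = ∏ i, stdGen i ^ x i := by
  conv_lhs => rw [← Finset.univ_sum_single x]
  rw [ofAdd_sum]
  refine Finset.prod_congr rfl fun i _ => ?_
  rw [stdGen, ← ofAdd_zsmul, ← Pi.single_smul, smul_eq_mul, mul_one]

/-- On vectors killed by all products of `d + 1` of the operators `ρ (e i) - χ i`, the matrix
coefficients of `ρ`, restricted to the coordinates in `S`, are polynomials of degree at most `d`
times the character with values `χ`. -/
lemma exists_poly_of_killed (ρ : Multiplicative (Fin l → ℤ) →* (End ℂ V)ˣ) (φ : V →ₗ[ℂ] ℂ)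
    (χ : Fin l → ℂˣ) (N : Fin l → End ℂ V)
    (hN : ∀ i, N i = (ρ (stdGen i) : End ℂ V) - algebraMap ℂ _ (χ i : ℂ))
    (S : Finset (Fin l)) (d : ℕ) (v : V) (hv : Killed N (d + 1) v) :
    ∃ q : MvPolynomial (Fin l) ℂ, q.totalDegree ≤ d ∧ ∀ x : Fin l → ℤ,
      φ ((ρ (∏ i ∈ S, stdGen i ^ x i) : End ℂ V) v) =
        MvPolynomial.eval (fun i => (x i : ℂ)) q * ((∏ i ∈ S, χ i ^ x i : ℂˣ) : ℂ) := by
  induction S using Finset.induction_on generalizing d v with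
  | empty => exact ⟨MvPolynomial.C (φ v), by simp, by simp⟩
  | insert j S hj ih =>
    have key : ∀ k : ℕ, ∃ q : MvPolynomial (Fin l) ℂ, k ∈ Finset.range (d + 1) →
        q.totalDegree ≤ d - k ∧ ∀ x : Fin l → ℤ,
        φ ((ρ (∏ i ∈ S, stdGen i ^ x i) : End ℂ V) ((N j ^ k) v)) =
          MvPolynomial.eval (fun i => (x i : ℂ)) q * ((∏ i ∈ S, χ i ^ x i : ℂˣ) : ℂ) := by
      intro k
      by_cases hk : k ∈ Finset.range (d + 1)
      · obtain ⟨q, hq⟩ := ih (d - k) ((N j ^ k) v) (Killed.pow_apply (by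
          have := Finset.mem_range.mp hk
          rwa [show d - k + 1 + k = d + 1 by omega]) j)
        exact ⟨q, fun _ => hq⟩
      · exact ⟨0, fun h => absurd h hk⟩
    choose q hq using key
    choose b hb hb' using exists_choose_poly (σ := Fin l) j
    refine ⟨∑ k ∈ Finset.range (d + 1),
      MvPolynomial.C ((χ j ^ (-k : ℤ) : ℂˣ) : ℂ) * (b k * q k), ?_, fun x => ?_⟩
    · refine (MvPolynomial.totalDegree_finsetSum _ _).trans (Finset.sup_le fun k hk => ?_)
      refine (MvPolynomial.totalDegree_mul _ _).trans ?_
      rw [MvPolynomial.totalDegree_C, zero_add]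
      refine (MvPolynomial.totalDegree_mul _ _).trans ?_
      have h1 := hb k
      have h2 := (hq k hk).1
      have := Finset.mem_range.mp hk
      omega
    · have hv0 : (N j ^ (d + 1)) v = 0 :=
        Killed.pow_apply (d := 0) (by rwa [zero_add]) j
      rw [Finset.prod_insert hj, mul_comm, map_mul, Units.val_mul, Module.End.mul_apply, map_zpow,
        zpow_apply_eq_sum _ (χ j) (N j) (hN j) d v hv0, Finset.prod_insert hj]
      simp only [map_sum, map_smul, Finset.sum_mul]
      refine Finset.sum_congr rfl fun k hk => ?_
      rw [(hq k hk).2 x, sub_eq_add_neg, zpow_add, map_mul, map_mul, hb', MvPolynomial.eval_C,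
        smul_eq_mul]
      push_cast
      ring

/-- The character of `ℤ^l` sending the `i`-th generator to `χ i`. -/
def charOf (χ : Fin l → ℂˣ) : Multiplicative (Fin l → ℤ) →* ℂˣ where
  toFun x := ∏ i, χ i ^ (Multiplicative.toAdd x i)
  map_one' := by simp
  map_mul' x y := by simp [zpow_add, Finset.prod_mul_distrib]

/-- The joint generalised eigenspace of the generators contributes a single term, namely
a polynomial of degree less than `dim V` times the corresponding character. -/
lemma exists_term_of_mem_iInf [FiniteDimensional ℂ V]
    (ρ : Multiplicative (Fin l → ℤ) →* (End ℂ V)ˣ) (φ : V →ₗ[ℂ] ℂ) (c : Fin l → ℂ) (v : V)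
    (hv : v ∈ ⨅ i, (ρ (stdGen i) : End ℂ V).maxGenEigenspace (c i)) :
    ∃ (t : Multiplicative (Fin l → ℤ) →* ℂˣ) (q : MvPolynomial (Fin l) ℂ),
      q.totalDegree ≤ finrank ℂ V - 1 ∧ ∀ x : Fin l → ℤ,
        φ ((ρ (Multiplicative.ofAdd x) : End ℂ V) v) =
          MvPolynomial.eval (fun i => (x i : ℂ)) q *
            ((t (Multiplicative.ofAdd x) : ℂˣ) : ℂ) := by
  by_cases hv0 : v = 0
  · exact ⟨1, 0, by simp, by simp [hv0]⟩
  set W := ⨅ i, (ρ (stdGen i) : End ℂ V).maxGenEigenspace (c i) with hW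
  let N : Fin l → End ℂ V := fun i => (ρ (stdGen i) : End ℂ V) - algebraMap ℂ _ (c i)
  have hcomm : ∀ i j, Commute (ρ (stdGen i) : End ℂ V) (ρ (stdGen j) : End ℂ V) := by
    intro i j
    exact ((Commute.all (stdGen i) (stdGen j)).map ρ).units_val
  have hNA : ∀ i j, Commute (ρ (stdGen i) : End ℂ V) (N j) := fun i j =>
    (hcomm i j).sub_right (Algebra.commute_algebraMap_right _ _)
  have hNN : ∀ i j, Commute (N i) (N j) := fun i j =>
    (hNA i j).sub_left (Algebra.commute_algebraMap_left _ _)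
  have hnil : ∀ i, ∀ w ∈ W, (N i ^ finrank ℂ V) w = 0 := by
    intro i w hw
    have := (Submodule.mem_iInf _).mp hw i
    rw [Module.End.maxGenEigenspace_eq_genEigenspace_finrank, Module.End.mem_genEigenspace_nat]
      at this
    rw [LinearMap.mem_ker] at this
    rwa [← Algebra.algebraMap_eq_smul_one] at this
  have hinv : ∀ i, W.map (N i) ≤ W := by
    rintro i _ ⟨u, hu, rfl⟩
    refine (Submodule.mem_iInf _).mpr fun j => ?_
    exact Module.End.mapsTo_maxGenEigenspace_of_comm (hNA j i) (c j) ((Submodule.mem_iInf _).mp hu j)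
  have hpos : 0 < finrank ℂ V := by
    have : Nontrivial V := ⟨v, 0, hv0⟩
    exact finrank_pos
  -- The `ρ (stdGen i)` are invertible, so zero is not a generalised eigenvalue.
  have hc : ∀ i, c i ≠ 0 := by
    intro i hi
    apply hv0
    have h := hnil i v hv
    simp only [N, hi, map_zero, sub_zero] at h
    rw [← Units.val_pow_eq_pow_val] at h
    have h2 := congrArg (((ρ (stdGen i) ^ finrank ℂ V)⁻¹ : (End ℂ V)ˣ) : End ℂ V) h
    rwa [← Module.End.mul_apply, Units.inv_mul, map_zero, Module.End.one_apply] at h2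
  have hk : Killed N (finrank ℂ V - 1 + 1) v := by
    rw [Nat.sub_add_cancel hpos]
    exact killed_of_finrank_le hNN W hinv hnil (Submodule.finrank_le W) hv
  obtain ⟨q, hq, h⟩ := exists_poly_of_killed ρ φ (fun i => Units.mk0 (c i) (hc i)) N
    (fun i => rfl) Finset.univ _ v hk
  refine ⟨charOf fun i => Units.mk0 (c i) (hc i), q, hq, fun x => ?_⟩
  rw [ofAdd_eq_prod, h x, ← ofAdd_eq_prod]
  rfl

/-- The conclusion of the theorem, with the finite set of characters encoded as the support of a
finitely supported family of polynomials so that it is visibly additive in `v`. -/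
lemma exists_finsupp [FiniteDimensional ℂ V]
    (ρ : Multiplicative (Fin l → ℤ) →* (End ℂ V)ˣ) (φ : V →ₗ[ℂ] ℂ) (v : V) :
    ∃ Q : (Multiplicative (Fin l → ℤ) →* ℂˣ) →₀
        MvPolynomial.restrictTotalDegree (Fin l) ℂ (finrank ℂ V - 1),
      ∀ x : Fin l → ℤ, φ ((ρ (Multiplicative.ofAdd x) : End ℂ V) v) =
        Q.sum fun t q => MvPolynomial.eval (fun i => (x i : ℂ)) (q : MvPolynomial (Fin l) ℂ) *
          ((t (Multiplicative.ofAdd x) : ℂˣ) : ℂ) := by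
  have htop := Module.End.iSup_iInf_maxGenEigenspace_eq_top_of_iSup_maxGenEigenspace_eq_top_of_commute
    (fun i : Fin l => (ρ (stdGen i) : End ℂ V))
    (fun i j _ => ((Commute.all (stdGen i) (stdGen j)).map ρ).units_val)
    (fun i => Module.End.iSup_maxGenEigenspace_eq_top _)
  have hv : v ∈ ⨆ c : Fin l → ℂ, ⨅ i, (ρ (stdGen i) : End ℂ V).maxGenEigenspace (c i) :=
    htop ▸ Submodule.mem_top
  refine Submodule.iSup_induction (motive := fun v => ∃ Q : (Multiplicative (Fin l → ℤ) →* ℂˣ) →₀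
        MvPolynomial.restrictTotalDegree (Fin l) ℂ (finrank ℂ V - 1),
      ∀ x : Fin l → ℤ, φ ((ρ (Multiplicative.ofAdd x) : End ℂ V) v) =
        Q.sum fun t q => MvPolynomial.eval (fun i => (x i : ℂ)) (q : MvPolynomial (Fin l) ℂ) *
          ((t (Multiplicative.ofAdd x) : ℂˣ) : ℂ)) _ hv ?_ ?_ ?_
  · intro c w hw
    obtain ⟨t, q, hq, h⟩ := exists_term_of_mem_iInf ρ φ c w hw
    refine ⟨Finsupp.single t ⟨q, (MvPolynomial.mem_restrictTotalDegree _ _ _).mpr hq⟩, fun x => ?_⟩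
    rw [Finsupp.sum_single_index (by simp), h x]
  · exact ⟨0, by simp⟩
  · rintro u w ⟨Q₁, h₁⟩ ⟨Q₂, h₂⟩
    refine ⟨Q₁ + Q₂, fun x => ?_⟩
    rw [Finsupp.sum_add_index' (by simp) (by simp [add_mul]), map_add, map_add, h₁, h₂]

end Rep


/-- Let `V` be a finite-dimensional complex vector space, `ρ : ℤ^l → GL(V)` a representation,
`φ` a linear functional on `V` and `v ∈ V`. Then there are a finite set `ε` of characters
`t : ℤ^l → ℂˣ` and, for each `t ∈ ε`, a polynomial function `E t : ℤ^l → ℂ` of total degree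
at most `dim V - 1`, such that `φ (ρ x v) = ∑ t ∈ ε, E t x * t x` for every `x ∈ ℤ^l`. -/
theorem stmt5 (l : ℕ) (V : Type*) [AddCommGroup V] [Module ℂ V] [FiniteDimensional ℂ V]
    (ρ : Multiplicative (Fin l → ℤ) →* (V →ₗ[ℂ] V)ˣ) (φ : V →ₗ[ℂ] ℂ) (v : V) :
    ∃ (ε : Finset (Multiplicative (Fin l → ℤ) →* ℂˣ))
      (E : (Multiplicative (Fin l → ℤ) →* ℂˣ) → (Fin l → ℤ) → ℂ),
      (∀ t ∈ ε, ∃ q : MvPolynomial (Fin l) ℂ,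
        q.totalDegree ≤ Module.finrank ℂ V - 1 ∧
        ∀ x : Fin l → ℤ, E t x = MvPolynomial.eval (fun i => (x i : ℂ)) q) ∧
      ∀ x : Fin l → ℤ,
        φ ((ρ (Multiplicative.ofAdd x) : V →ₗ[ℂ] V) v) =
          ∑ t ∈ ε, E t x * ((t (Multiplicative.ofAdd x) : ℂˣ) : ℂ) := by
  obtain ⟨Q, hQ⟩ := exists_finsupp ρ φ v
  exact ⟨Q.support, fun t x => MvPolynomial.eval (fun i => (x i : ℂ)) (Q t : MvPolynomial _ ℂ),
    fun t _ => ⟨Q t, (MvPolynomial.mem_restrictTotalDegree _ _ _).mp (Q t).2, fun _ => rfl⟩, hQ⟩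
end

section
/- Let ε be a finite set of pairwise distinct characters of ℤ^l, i.e. pairwise distinct group homomorphisms t : ℤ^l → ℂˣ, and for each t ∈ ε let E_t : ℤ^l → ℂ be a polynomial function. If Σ_{t ∈ ε} E_t(x)·t(x) = 0 for every x ∈ ℤ^l, then E_t(x) = 0 for every t ∈ ε and every x ∈ ℤ^l. -/
/-!
The translations `f ↦ f (· + v)` are commuting endomorphisms of the space of functions
`ℤ^l → ℂ`. If `E` is polynomial and `t` is a character, then `E · t` is a simultaneous
generalized eigenvector of all translations, the eigenvalue of translation by `v` being `t v`:
a multiple of `t` is an honest eigenvector, and multiplying by a coordinate function raises the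
required exponent by at most one (`shiftEnd_pow_coord_mul`). Distinct characters give
distinct systems of eigenvalues, and simultaneous generalized eigenspaces of commuting
endomorphisms are independent, so a vanishing sum `∑ E t · t` has vanishing summands. As the
values of `t` are units, each `E t` vanishes.
-/

/-- Translation by `v` on complex-valued functions on `ℤ^l`. -/
noncomputable def shiftEnd {l : ℕ} (v : Fin l → ℤ) : Module.End ℂ ((Fin l → ℤ) → ℂ) :=
  LinearMap.funLeft ℂ ℂ (· + v)

theorem shiftEnd_apply {l : ℕ} (v : Fin l → ℤ) (f : (Fin l → ℤ) → ℂ) (x : Fin l → ℤ) :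
    shiftEnd v f x = f (x + v) := rfl

theorem shiftEnd_commute {l : ℕ} (v w : Fin l → ℤ) :
    Commute (shiftEnd v) (shiftEnd w) := by
  ext f x
  simp only [Module.End.mul_apply, shiftEnd_apply, add_right_comm]

/-- Rests on the identity `(S - c) (xᵢ f) = xᵢ (S - c) f + vᵢ S f`, where `S` is the
translation by `v`. -/
theorem shiftEnd_pow_coord_mul {l : ℕ} (v : Fin l → ℤ) (c : ℂ) (i : Fin l) (k : ℕ)
    (f : (Fin l → ℤ) → ℂ) (hf : ((shiftEnd v - c • 1) ^ k) f = 0) :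
    ((shiftEnd v - c • 1) ^ (k + 1)) (fun x => (x i : ℂ) * f x) = 0 := by
  induction k generalizing f with
  | zero =>
    have h0 : f = 0 := by simpa using hf
    have h1 : (fun x : Fin l → ℤ => (x i : ℂ) * f x) = 0 := by
      subst h0
      ext x
      simp
    rw [h1, map_zero]
  | succ k ih =>
    have key : (shiftEnd v - c • 1) (fun x => (x i : ℂ) * f x)
        = (fun x => (x i : ℂ) * (shiftEnd v - c • 1) f x) + (v i : ℂ) • shiftEnd v f := by
      ext x
      simp [shiftEnd_apply]
      ring
    have hcomm : Commute ((shiftEnd v - c • 1) ^ (k + 1)) (shiftEnd v) := by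
      refine Commute.pow_left ?_ _
      exact (Commute.refl _).sub_left ((Commute.one_left _).smul_left c)
    have h2 : ((shiftEnd v - c • 1) ^ (k + 1)) (shiftEnd v f) = 0 := by
      rw [← Module.End.mul_apply, hcomm.eq, Module.End.mul_apply, hf, map_zero]
    rw [pow_succ, Module.End.mul_apply, key, map_add, map_smul, h2, smul_zero, add_zero]
    apply ih
    rw [← Module.End.mul_apply, ← pow_succ, hf]

theorem poly_mul_character_mem_maxGenEigenspace {l : ℕ} (t : Multiplicative (Fin l → ℤ) →* ℂˣ)
    (q : MvPolynomial (Fin l) ℂ) (v : Fin l → ℤ) :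
    (fun x : Fin l → ℤ => MvPolynomial.eval (fun i => (x i : ℂ)) q *
      ((t (Multiplicative.ofAdd x) : ℂˣ) : ℂ)) ∈
    (shiftEnd v).maxGenEigenspace ((t (Multiplicative.ofAdd v) : ℂˣ) : ℂ) := by
  induction q using MvPolynomial.induction_on with
  | C a =>
    rw [Module.End.mem_maxGenEigenspace]
    refine ⟨1, ?_⟩
    ext x
    simp [shiftEnd_apply]
    ring
  | add p q hp hq =>
    convert Submodule.add_mem _ hp hq using 1
    ext x
    simp [add_mul]
  | mul_X p i hp =>
    rw [Module.End.mem_maxGenEigenspace] at hp ⊢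
    obtain ⟨k, hk⟩ := hp
    refine ⟨k + 1, ?_⟩
    convert shiftEnd_pow_coord_mul v _ i k _ hk using 2
    ext x
    simp only [map_mul, MvPolynomial.eval_X]
    ring

/-- Let `ε` be a finite set of pairwise distinct characters `t : ℤ^l → ℂˣ`, and for each
`t ∈ ε` let `E t : ℤ^l → ℂ` be a polynomial function. If `∑ t ∈ ε, E t x * t x = 0` for every
`x ∈ ℤ^l`, then `E t x = 0` for every `t ∈ ε` and every `x`. -/
theorem stmt6 (l : ℕ) (ε : Finset (Multiplicative (Fin l → ℤ) →* ℂˣ))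
    (E : (Multiplicative (Fin l → ℤ) →* ℂˣ) → (Fin l → ℤ) → ℂ)
    (hE : ∀ t ∈ ε, ∃ q : MvPolynomial (Fin l) ℂ,
      ∀ x : Fin l → ℤ, E t x = MvPolynomial.eval (fun i => (x i : ℂ)) q)
    (hsum : ∀ x : Fin l → ℤ,
      ∑ t ∈ ε, E t x * ((t (Multiplicative.ofAdd x) : ℂˣ) : ℂ) = 0) :
    ∀ t ∈ ε, ∀ x : Fin l → ℤ, E t x = 0 := by
  have hind := Module.End.independent_iInf_maxGenEigenspace_of_forall_mapsTo
    (shiftEnd (l := l))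
    (fun v w φ => Module.End.mapsTo_maxGenEigenspace_of_comm (shiftEnd_commute w v) φ)
  have hinj : Function.Injective (fun (t : Multiplicative (Fin l → ℤ) →* ℂˣ)
      (v : Fin l → ℤ) => ((t (Multiplicative.ofAdd v) : ℂˣ) : ℂ)) := by
    intro s t hst
    refine MonoidHom.ext fun v => Units.ext ?_
    exact congrFun hst v.toAdd
  have hind' := hind.comp hinj
  have hmem : ∀ t ∈ ε, (fun x => E t x * ((t (Multiplicative.ofAdd x) : ℂˣ) : ℂ)) ∈
      ⨅ v, (shiftEnd v).maxGenEigenspace ((t (Multiplicative.ofAdd v) : ℂˣ) : ℂ) := by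
    intro t ht
    obtain ⟨q, hq⟩ := hE t ht
    simp only [hq, Submodule.mem_iInf]
    exact poly_mul_character_mem_maxGenEigenspace t q
  intro t ht x
  have hz := ((iSupIndep_iff_finsetSum_eq_zero_imp_eq_zero _).mp hind') ε _ hmem (by
    ext x
    simpa using hsum x) t ht
  simpa using congrFun hz x
end

section
/- Let V be a complex vector space of finite dimension N, and let ρ : ℤ^l → GL(V) be a group homomorphism such that ρ(x) is unipotent for every x ∈ ℤ^l (that is, (ρ(x) − id)^N = 0). Then for every linear functional φ on V and every v ∈ V, the function x ↦ φ(ρ(x)(v)) on ℤ^l is a polynomial function of total degree at most N − 1. -/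
/-!
Write `e i` for the standard generators of `ℤ^l` and `n i = ρ (e i) - 1`; these are commuting
nilpotent endomorphisms. The binomial series gives `ρ (e i) ^ m = ∑_{k < N} (m choose k) (n i) ^ k`
for every integer `m` (`zpow_eq_sum_choose`), and multiplying these over `i` writes `ρ x` as
`∑_k (∏ i, (x i choose k i)) • ∏ i, (n i) ^ (k i)` over multi-indices `k`. The coefficient of the
`k`-th term is a polynomial in `x` of degree at most `∑ i, k i` (`exists_choose_poly`), so the
degree bound follows once the terms with `∑ i, k i ≥ N` are known to vanish. They do, because
composing a nonzero endomorphism with a nilpotent one that commutes with it strictly lowers the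
rank (`finrank_range_mul_lt`): a product of `N` commuting nilpotent endomorphisms of an
`N`-dimensional space is zero.

To form products over `i` without tracking noncommutative ordering, the products are taken in the
commutative group algebra of `ℤ^l` and then mapped to `End V`.
-/

/-- The binomial series for integer powers of a unipotent unit. -/
lemma zpow_eq_sum_choose {A : Type*} [Ring A] [Algebra ℂ A] (u : Aˣ) (N : ℕ)
    (h : ((u : A) - 1) ^ N = 0) (x : ℤ) :
    ((u ^ x : Aˣ) : A) =
      ∑ k ∈ Finset.range N, Ring.choose (x : ℂ) k • ((u : A) - 1) ^ k := by
  have step : ∀ z : ℂ,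
      ∑ k ∈ Finset.range N, Ring.choose (z + 1) k • ((u : A) - 1) ^ k =
        u * ∑ k ∈ Finset.range N, Ring.choose z k • ((u : A) - 1) ^ k := by
    intro z
    cases N with
    | zero => simp
    | succ M =>
      have hn : ((u : A) - 1) * ∑ k ∈ Finset.range (M + 1), Ring.choose z k • ((u : A) - 1) ^ k =
          ∑ k ∈ Finset.range M, Ring.choose z k • ((u : A) - 1) ^ (k + 1) := by
        simp only [Finset.mul_sum, mul_smul_comm, ← pow_succ']
        rw [Finset.sum_range_succ, h, smul_zero, add_zero]
      have hs : (u : A) * ∑ k ∈ Finset.range (M + 1), Ring.choose z k • ((u : A) - 1) ^ k =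
          ((u : A) - 1) * ∑ k ∈ Finset.range (M + 1), Ring.choose z k • ((u : A) - 1) ^ k +
          ∑ k ∈ Finset.range (M + 1), Ring.choose z k • ((u : A) - 1) ^ k := by
        rw [sub_mul, one_mul, sub_add_cancel]
      rw [hs, hn, Finset.sum_range_succ', Finset.sum_range_succ' _ M, ← add_assoc,
        ← Finset.sum_add_distrib]
      simp [Ring.choose_succ_succ, add_smul]
  induction x using Int.induction_on with
  | zero =>
    cases N with
    | zero => simpa using h
    | succ M =>
      rw [Finset.sum_range_succ']
      simp [Ring.choose_zero_succ]
  | succ m ih =>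
    rw [Int.cast_add, Int.cast_one, step, ← ih, ← Units.val_mul, ← zpow_one_add, add_comm]
  | pred m ih =>
    rw [← Units.mul_right_inj u, ← step, ← Units.val_mul, ← zpow_one_add]
    convert ih using 2
    · congr 2
      ring
    · push_cast
      simp

/-- `x ↦ (x i choose k)` is a polynomial function of degree at most `k`. -/
lemma exists_choose_poly_s7 {l : ℕ} (i : Fin l) (k : ℕ) :
    ∃ p : MvPolynomial (Fin l) ℂ, p.totalDegree ≤ k ∧
      ∀ x : Fin l → ℂ, MvPolynomial.eval x p = Ring.choose (x i) k := by
  refine ⟨MvPolynomial.C ((k.factorial : ℂ)⁻¹) *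
    ∏ j ∈ Finset.range k, (MvPolynomial.X i - MvPolynomial.C (j : ℂ)), ?_, ?_⟩
  · refine (MvPolynomial.totalDegree_mul _ _).trans ?_
    rw [MvPolynomial.totalDegree_C, zero_add]
    refine (MvPolynomial.totalDegree_finsetProd _ _).trans ?_
    refine (Finset.sum_le_card_nsmul _ _ 1 fun j _ => ?_).trans (by simp)
    refine (MvPolynomial.totalDegree_sub _ _).trans ?_
    rw [MvPolynomial.totalDegree_C, MvPolynomial.totalDegree_X]
    simp
  · intro x
    rw [Ring.choose_eq_smul, ← Polynomial.aeval_eq_smeval, Polynomial.aeval_def,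
      ← Polynomial.eval_map, descPochhammer_map, descPochhammer_eval_eq_prod_range]
    simp [map_prod]

section Rank

variable {V : Type*} [AddCommGroup V] [Module ℂ V] [FiniteDimensional ℂ V]

open Module

lemma finrank_range_mul_lt {a P : End ℂ V} (hc : Commute a P) (ha : IsNilpotent a) (hP : P ≠ 0) :
    finrank ℂ (LinearMap.range (a * P)) < finrank ℂ (LinearMap.range P) := by
  have hle : LinearMap.range (a * P) ≤ LinearMap.range P := by
    rw [hc.eq]
    exact LinearMap.range_comp_le_range a P
  refine Submodule.finrank_lt_finrank_of_lt (lt_of_le_of_ne hle fun heq => hP ?_)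
  -- If `a` maps the range of `P` onto itself, so does every power of `a`, and hence `0`.
  have hmap : ∀ k : ℕ, LinearMap.range (a ^ k * P) = LinearMap.range P := by
    intro k
    induction k with
    | zero => simp
    | succ k ih =>
      rw [pow_succ', mul_assoc, Module.End.mul_eq_comp, LinearMap.range_comp, ih,
        ← LinearMap.range_comp, ← Module.End.mul_eq_comp, heq]
  obtain ⟨k, hk⟩ := ha
  have := hmap k
  rw [hk, zero_mul, LinearMap.range_zero] at this
  exact LinearMap.range_eq_bot.1 this.symm

lemma finrank_range_pow_mul {a P : End ℂ V} (hc : Commute a P) (ha : IsNilpotent a) (k : ℕ) :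
    a ^ k * P = 0 ∨
      finrank ℂ (LinearMap.range (a ^ k * P)) + k ≤ finrank ℂ (LinearMap.range P) := by
  induction k with
  | zero => exact Or.inr (by rw [pow_zero, one_mul, add_zero])
  | succ k ih =>
    rw [pow_succ', mul_assoc]
    by_cases h0 : a ^ k * P = 0
    · simp [h0]
    · right
      have h1 := ih.resolve_left h0
      have h2 := finrank_range_mul_lt (((Commute.refl a).pow_right k).mul_right hc) ha h0
      omega

/-- A monomial in commuting nilpotent endomorphisms vanishes once its degree reaches the dimension.
The endomorphisms are the images of elements `b i` of a commutative algebra. -/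
lemma map_prod_pow_eq_zero {A ι : Type*} [CommRing A] [Algebra ℂ A] [Fintype ι]
    (F : A →ₐ[ℂ] End ℂ V) (b : ι → A) (hb : ∀ i, IsNilpotent (F (b i))) (k : ι → ℕ)
    (hk : finrank ℂ V ≤ ∑ i, k i) : F (∏ i, b i ^ k i) = 0 := by
  classical
  have key : ∀ s : Finset ι, F (∏ i ∈ s, b i ^ k i) = 0 ∨
      finrank ℂ (LinearMap.range (F (∏ i ∈ s, b i ^ k i))) + ∑ i ∈ s, k i ≤ finrank ℂ V := by
    intro s
    induction s using Finset.induction_on with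
    | empty => exact Or.inr (by rw [Finset.sum_empty, add_zero]; exact Submodule.finrank_le _)
    | insert i s hi ih =>
      rw [Finset.prod_insert hi, Finset.sum_insert hi, map_mul, map_pow]
      rcases ih with h | h
      · simp [h]
      · refine (finrank_range_pow_mul ((Commute.all _ _).map F) (hb i) (k i)).imp_right fun h' => ?_
        omega
  rcases key Finset.univ with h | h
  · exact h
  · have h0 : finrank ℂ (LinearMap.range (F (∏ i, b i ^ k i))) = 0 := by omega
    exact LinearMap.range_eq_bot.1 (Submodule.finrank_eq_zero.1 h0)

end Rank

/-- Let `V` be a complex vector space of finite dimension `N` and `ρ : ℤ^l → GL(V)` a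
representation such that `ρ x` is unipotent (`(ρ x - id) ^ N = 0`) for every `x`. Then for
every linear functional `φ` on `V` and every `v ∈ V`, the function `x ↦ φ (ρ x v)` on `ℤ^l`
is a polynomial function of total degree at most `N - 1`. -/
theorem stmt7 (l : ℕ) (V : Type*) [AddCommGroup V] [Module ℂ V] [FiniteDimensional ℂ V]
    (N : ℕ) (hN : Module.finrank ℂ V = N)
    (ρ : Multiplicative (Fin l → ℤ) →* (V →ₗ[ℂ] V)ˣ)
    (hu : ∀ x : Multiplicative (Fin l → ℤ), ((ρ x : V →ₗ[ℂ] V) - 1) ^ N = 0)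
    (φ : V →ₗ[ℂ] ℂ) (v : V) :
    ∃ q : MvPolynomial (Fin l) ℂ, q.totalDegree ≤ N - 1 ∧
      ∀ x : Fin l → ℤ,
        φ ((ρ (Multiplicative.ofAdd x) : V →ₗ[ℂ] V) v) =
          MvPolynomial.eval (fun i => (x i : ℂ)) q := by
  classical
  let F : MonoidAlgebra ℂ (Multiplicative (Fin l → ℤ)) →ₐ[ℂ] Module.End ℂ V :=
    MonoidAlgebra.lift ℂ _ _ ((Units.coeHom _).comp ρ)
  have hF : ∀ g, F (MonoidAlgebra.of ℂ _ g) = (ρ g : V →ₗ[ℂ] V) := fun g =>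
    MonoidAlgebra.lift_of _ g
  let e : Fin l → Multiplicative (Fin l → ℤ) := fun i => Multiplicative.ofAdd (Pi.single i 1)
  let b : Fin l → MonoidAlgebra ℂ (Multiplicative (Fin l → ℤ)) :=
    fun i => MonoidAlgebra.of ℂ _ (e i) - 1
  have hFb : ∀ i, F (b i) = (ρ (e i) : V →ₗ[ℂ] V) - 1 := fun i => by
    simp only [b, map_sub, hF, map_one]
  have hb : ∀ i, IsNilpotent (F (b i)) := fun i => ⟨N, by rw [hFb]; exact hu _⟩
  choose p hpdeg hpeval using fun (i : Fin l) (k : ℕ) => exists_choose_poly_s7 i k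
  have hdecomp : ∀ x : Fin l → ℤ, Multiplicative.ofAdd x = ∏ i, e i ^ x i := by
    intro x
    apply Multiplicative.toAdd.injective
    ext j
    simp [e, toAdd_prod, Finset.sum_apply, Pi.single_apply]
  have hpow : ∀ (i : Fin l) (m : ℤ), F (MonoidAlgebra.of ℂ _ (e i ^ m)) =
      F (∑ k ∈ Finset.range N, Ring.choose (m : ℂ) k • b i ^ k) := by
    intro i m
    rw [hF, map_zpow, zpow_eq_sum_choose _ N (hu (e i))]
    simp only [map_sum, map_smul, map_pow, hFb]
  -- The binomial identity `hpow` holds only after applying `F`, so products of its two sides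
  -- have to be compared there.
  have hprod : ∀ (f g : Fin l → MonoidAlgebra ℂ (Multiplicative (Fin l → ℤ))),
      (∀ i, F (f i) = F (g i)) → ∀ s : Finset (Fin l), F (∏ i ∈ s, f i) = F (∏ i ∈ s, g i) := by
    intro f g hfg s
    induction s using Finset.induction_on with
    | empty => simp
    | insert i s hi ih => rw [Finset.prod_insert hi, Finset.prod_insert hi, map_mul, map_mul, ih, hfg]
  have hexp : ∀ x : Fin l → ℤ, (ρ (Multiplicative.ofAdd x) : V →ₗ[ℂ] V) =
      ∑ k ∈ Fintype.piFinset fun _ : Fin l => Finset.range N,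
        (∏ i, Ring.choose (x i : ℂ) (k i)) • F (∏ i, b i ^ k i) := by
    intro x
    rw [← hF, hdecomp, map_prod, hprod _ _ (fun i => hpow i (x i)), Finset.prod_univ_sum, map_sum]
    refine Finset.sum_congr rfl fun k _ => ?_
    rw [← map_smul, Finset.prod_smul]
  refine ⟨∑ k ∈ Fintype.piFinset fun _ : Fin l => Finset.range N,
    MvPolynomial.C (φ (F (∏ i, b i ^ k i) v)) * ∏ i, p i (k i), ?_, ?_⟩
  · refine MvPolynomial.totalDegree_finsetSum_le fun k _ => ?_
    by_cases hk : N ≤ ∑ i, k i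
    · rw [map_prod_pow_eq_zero F b hb k (hN ▸ hk)]
      simp
    · refine (MvPolynomial.totalDegree_mul _ _).trans ?_
      rw [MvPolynomial.totalDegree_C, zero_add]
      refine (MvPolynomial.totalDegree_finsetProd _ _).trans ?_
      refine (Finset.sum_le_sum fun i _ => hpdeg i (k i)).trans ?_
      omega
  · intro x
    rw [hexp]
    simp [LinearMap.sum_apply, map_sum, map_prod, hpeval, mul_comm]
end

section
/- (Kilmoyer) Let (W, S) be a finite Coxeter system, let P, Q ⊆ S, and let d ∈ D^{Q,P} = {w ∈ W : w⁻¹ ∈ W^Q and w ∈ W^P}. Then the subgroup W_Q ∩ d·W_P·d⁻¹ of W equals the standard parabolic subgroup W_L generated by L := Q ∩ {d·p·d⁻¹ : p ∈ P} (note that L is a subset of S since L ⊆ Q ⊆ S). -/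
/-!
The engine is the exchange condition, which is obtained from the reflection cocycle. Each simple
reflection `s i` acts on `W × ZMod 2` by `(x, ε) ↦ (s i * x * s i, ε + [x = s i])`; these
permutations satisfy the Coxeter relations, so they define an action of `W`
(`reflectionAction`). The resulting cocycle `reflectionParity cs w x` detects, at a simple
reflection `x`, whether `x` is a right descent of `w` (`reflectionParity_simple_ne_zero_iff`), and
the cocycle identity then yields the exchange condition (`exchange`).

Exchange gives reduced words with letters in `P` for the elements of `W_P`, and the additivity
`ℓ (d * v) = ℓ d + ℓ v` for `d` minimal in `d * W_P` and `v ∈ W_P`.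

For the theorem itself, let `u * d = d * v` with `u ∈ W_Q`, `v ∈ W_P`, and let `p ∈ P` be the last
letter of a reduced word of `v`. By additivity `p` is a right descent of `u * d` and not of `d`,
so the exchange takes place inside `u`: `t = d * p * d⁻¹` lies in `W_Q`. Additivity on the other
side gives `ℓ t + ℓ d = ℓ (d * p) ≤ ℓ d + 1`, so `t` is a simple reflection in `Q`, that is,
`t ∈ L`. Replacing `(u, v)` by `(u * t, v * p)` shortens `v`, and induction concludes.
-/

/-- For a Coxeter system `cs` and a subset `P` of the set of simple reflections, the set of
elements of minimal length in their left coset `w * W_P`, where `W_P` is the standard parabolic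
subgroup generated by `P`. -/
def minCosetReps {B W : Type*} [Group W] {M : CoxeterMatrix B}
    (cs : CoxeterSystem M W) (P : Set W) : Set W :=
  {w : W | ∀ u ∈ Subgroup.closure P, cs.length w ≤ cs.length (w * u)}

namespace Kilmoyer

open CoxeterSystem

variable {B W : Type*} [Group W] {M : CoxeterMatrix B} (cs : CoxeterSystem M W)

/-! ### The reflection cocycle -/

open Classical in
/-- The permutation `(x, ε) ↦ (s i * x * s i, ε + [x = s i])` of `W × ZMod 2`. The first
coordinate ranges over all of `W` rather than over the reflections only. -/
noncomputable def simplePerm (i : B) : Equiv.Perm (W × ZMod 2) :=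
  Function.Involutive.toPerm
    (fun y => (cs.simple i * y.1 * cs.simple i, y.2 + if y.1 = cs.simple i then 1 else 0)) <| by
    rintro ⟨x, ε⟩
    have h : cs.simple i * x * cs.simple i = cs.simple i ↔ x = cs.simple i := by
      constructor
      · intro h
        have := congrArg (fun y => cs.simple i * y * cs.simple i) h
        simpa [mul_assoc] using this
      · rintro rfl
        simp
    ext
    · simp [mul_assoc]
    · simp only [h, add_assoc, CharTwo.add_self_eq_zero, add_zero]

open Classical in
theorem simplePerm_apply (i : B) (y : W × ZMod 2) :
    simplePerm cs i y =
      (cs.simple i * y.1 * cs.simple i, y.2 + if y.1 = cs.simple i then 1 else 0) := rfl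

theorem simple_mul_pow (i j : B) (k : ℕ) :
    cs.simple j * (cs.simple i * cs.simple j) ^ k =
      ((cs.simple i * cs.simple j) ^ k)⁻¹ * cs.simple j := by
  induction k with
  | zero => simp
  | succ k ih =>
    rw [pow_succ, ← mul_assoc, ih, ← pow_succ, pow_succ']
    simp [mul_assoc]

open Classical in
/-- The second coordinate counts the `l < 2 * k` for which `x` is the reflection
`s j * (s i * s j) ^ l` of the dihedral group generated by `s i` and `s j`. -/
theorem simplePerm_mul_pow (i j : B) (k : ℕ) (x : W) (ε : ZMod 2) :
    ((simplePerm cs i * simplePerm cs j) ^ k) (x, ε) =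
      ((cs.simple i * cs.simple j) ^ k * x * ((cs.simple i * cs.simple j) ^ k)⁻¹,
        ε + ∑ l ∈ Finset.range (2 * k),
          if x = cs.simple j * (cs.simple i * cs.simple j) ^ l then 1 else 0) := by
  induction k with
  | zero => simp
  | succ k ih =>
    rw [pow_succ', Equiv.Perm.mul_apply, ih, Equiv.Perm.mul_apply, simplePerm_apply,
      simplePerm_apply]
    have e1 : (cs.simple i * cs.simple j) ^ k * x * ((cs.simple i * cs.simple j) ^ k)⁻¹ =
        cs.simple j ↔ x = cs.simple j * (cs.simple i * cs.simple j) ^ (2 * k) := by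
      rw [two_mul, pow_add, ← mul_assoc (cs.simple j), simple_mul_pow, mul_inv_eq_iff_eq_mul,
        mul_assoc, eq_inv_mul_iff_mul_eq]
    have e2 : cs.simple j * ((cs.simple i * cs.simple j) ^ k * x *
        ((cs.simple i * cs.simple j) ^ k)⁻¹) * cs.simple j = cs.simple i ↔
        x = cs.simple j * (cs.simple i * cs.simple j) ^ (2 * k + 1) := by
      have h1 : cs.simple j * (cs.simple i * cs.simple j) ^ (2 * k + 1) =
          ((cs.simple i * cs.simple j) ^ k)⁻¹ *
            (cs.simple j * (cs.simple i * cs.simple j)) * (cs.simple i * cs.simple j) ^ k := by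
        rw [show 2 * k + 1 = k + (1 + k) by ring, pow_add, ← mul_assoc, simple_mul_pow, pow_add,
          pow_one]
        simp only [mul_assoc]
      rw [h1]
      generalize (cs.simple i * cs.simple j) ^ k = a
      constructor
      · intro h
        rw [← h]
        simp [mul_assoc]
      · rintro rfl
        simp [mul_assoc]
    ext
    · simp only [pow_succ', mul_inv_rev, inv_simple, mul_assoc]
    · simp only [e1, e2]
      rw [show 2 * (k + 1) = 2 * k + 1 + 1 by ring, Finset.sum_range_succ, Finset.sum_range_succ]
      simp only [add_assoc]

theorem isLiftable_simplePerm : M.IsLiftable (simplePerm cs) := by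
  classical
  intro i j
  ext1 ⟨x, ε⟩
  rw [simplePerm_mul_pow, simple_mul_simple_pow, two_mul, Finset.sum_range_add]
  -- The reflections `s j * (s i * s j) ^ l` have period `M i j` in `l`, so each is counted twice.
  simp [pow_add, CharTwo.add_self_eq_zero]

/-- The action of `W` on `W × ZMod 2` in which `s i` acts by `simplePerm cs i`. -/
noncomputable def reflectionAction : W →* Equiv.Perm (W × ZMod 2) :=
  cs.lift ⟨simplePerm cs, isLiftable_simplePerm cs⟩

/-- For a reflection `x`, the parity of the number of occurrences of `x` in the right inversion
sequence of any word for `w`. -/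
noncomputable def reflectionParity (w x : W) : ZMod 2 := (reflectionAction cs w (x, 0)).2

theorem reflectionAction_simple (i : B) :
    reflectionAction cs (cs.simple i) = simplePerm cs i :=
  cs.lift_apply_simple (isLiftable_simplePerm cs) i

theorem reflectionAction_apply (w x : W) (ε : ZMod 2) :
    reflectionAction cs w (x, ε) = (w * x * w⁻¹, ε + reflectionParity cs w x) := by
  unfold reflectionParity
  induction w using cs.simple_induction_left generalizing x ε with
  | one => simp
  | mul_simple_left w i ih =>
    simp only [map_mul, Equiv.Perm.mul_apply]
    rw [ih x ε, ih x 0, reflectionAction_simple, simplePerm_apply, simplePerm_apply]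
    simp [mul_assoc, add_assoc]

theorem reflectionParity_mul (w w' x : W) :
    reflectionParity cs (w * w') x =
      reflectionParity cs w' x + reflectionParity cs w (w' * x * w'⁻¹) := by
  rw [reflectionParity, map_mul, Equiv.Perm.mul_apply, reflectionAction_apply,
    reflectionAction_apply, zero_add]

open Classical in
theorem reflectionParity_simple (i : B) (x : W) :
    reflectionParity cs (cs.simple i) x = if x = cs.simple i then 1 else 0 := by
  rw [reflectionParity, reflectionAction_simple, simplePerm_apply, zero_add]

theorem mem_rightInvSeq_of_reflectionParity_ne_zero (ω : List B) (x : W)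
    (h : reflectionParity cs (cs.wordProd ω) x ≠ 0) : x ∈ cs.rightInvSeq ω := by
  classical
  induction ω with
  | nil => simp [reflectionParity] at h
  | cons i ω ih =>
    rw [wordProd_cons, reflectionParity_mul, reflectionParity_simple] at h
    rw [rightInvSeq, List.mem_cons]
    split_ifs at h with hx
    · left
      rw [← hx]
      group
    · right
      exact ih (by simpa using h)

/-- The cocycle at a simple reflection detects right descents. -/
theorem reflectionParity_simple_ne_zero_iff (w : W) (i : B) :
    reflectionParity cs w (cs.simple i) ≠ 0 ↔ cs.length (w * cs.simple i) < cs.length w := by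
  have key : ∀ w : W, reflectionParity cs w (cs.simple i) ≠ 0 →
      cs.length (w * cs.simple i) < cs.length w := by
    intro w h
    obtain ⟨ω, hω, rfl⟩ := cs.exists_isReduced w
    exact (cs.isRightInversion_of_mem_rightInvSeq hω
      (mem_rightInvSeq_of_reflectionParity_ne_zero cs ω _ h)).2
  refine ⟨key w, fun hlt h0 => ?_⟩
  have h := key (w * cs.simple i) (by
    rw [reflectionParity_mul, reflectionParity_simple]
    simp [h0])
  rw [simple_mul_simple_cancel_right] at h
  omega

/-! ### Exchange and its consequences -/

theorem simple_mul_eq_mul_simple (c : W) (r i : B)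
    (h1 : ¬ cs.length (c * cs.simple i) < cs.length c)
    (h2 : cs.length (cs.simple r * c * cs.simple i) < cs.length (cs.simple r * c)) :
    cs.simple r * c = c * cs.simple i := by
  classical
  rw [← reflectionParity_simple_ne_zero_iff, not_not] at h1
  rw [← reflectionParity_simple_ne_zero_iff, reflectionParity_mul, h1, zero_add,
    reflectionParity_simple] at h2
  have h : c * cs.simple i * c⁻¹ = cs.simple r := by
    by_contra h
    simp [h] at h2
  rw [← h]
  group

/-- The exchange condition for a product `π α * b`, where the omitted letter is located either in
`b`, in which case `s i` is a right descent of `b`, or in `α`. -/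
theorem exchange (α : List B) (b : W) (i : B)
    (h : cs.length (cs.wordProd α * b * cs.simple i) < cs.length (cs.wordProd α * b)) :
    cs.length (b * cs.simple i) < cs.length b ∨
      ∃ j < α.length, cs.wordProd α * b * cs.simple i = cs.wordProd (α.eraseIdx j) * b := by
  induction α with
  | nil => left; simpa using h
  | cons r α ih =>
    by_cases hc : cs.length (cs.wordProd α * b * cs.simple i) < cs.length (cs.wordProd α * b)
    · rcases ih hc with hb | ⟨j, hj, e⟩
      · exact Or.inl hb
      · refine Or.inr ⟨j + 1, by simpa using hj, ?_⟩
        simp only [wordProd_cons, List.eraseIdx_cons_succ, mul_assoc] at e ⊢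
        rw [e]
    · refine Or.inr ⟨0, by simp, ?_⟩
      rw [wordProd_cons, mul_assoc (cs.simple r)] at h ⊢
      rw [simple_mul_eq_mul_simple cs _ r i hc h]
      simp

theorem wordProd_mem_closure {P : Set W} {ω : List B} (h : ∀ i ∈ ω, cs.simple i ∈ P) :
    cs.wordProd ω ∈ Subgroup.closure P := by
  refine Subgroup.list_prod_mem _ fun x hx => ?_
  obtain ⟨i, hi, rfl⟩ := List.mem_map.1 hx
  exact Subgroup.subset_closure (h i hi)

theorem exists_isReduced_of_mem_closure {P : Set W} (hP : P ⊆ Set.range cs.simple) {v : W}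
    (hv : v ∈ Subgroup.closure P) :
    ∃ ω : List B, cs.IsReduced ω ∧ v = cs.wordProd ω ∧ ∀ i ∈ ω, cs.simple i ∈ P := by
  have step : ∀ v : W, ∀ p ∈ P,
      (∃ ω : List B, cs.IsReduced ω ∧ v = cs.wordProd ω ∧ ∀ i ∈ ω, cs.simple i ∈ P) →
      ∃ ω : List B, cs.IsReduced ω ∧ v * p = cs.wordProd ω ∧ ∀ i ∈ ω, cs.simple i ∈ P := by
    rintro v p hp ⟨ω, hω, rfl, hωP⟩
    obtain ⟨i, rfl⟩ := hP hp
    rcases cs.length_mul_simple (cs.wordProd ω) i with hl | hl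
    · refine ⟨ω ++ [i], ?_, by simp [wordProd_append], ?_⟩
      · rw [CoxeterSystem.IsReduced, wordProd_append, wordProd_singleton, hl, hω.eq]
        simp
      · intro k hk
        rcases List.mem_append.1 hk with hk | hk
        · exact hωP k hk
        · rw [List.mem_singleton.1 hk]
          exact hp
    · rcases exchange cs ω 1 i (by simp only [mul_one]; omega) with h | ⟨j, hj, e⟩
      · simp at h
      · simp only [mul_one] at e
        refine ⟨ω.eraseIdx j, ?_, e, fun k hk => hωP k (List.mem_of_mem_eraseIdx hk)⟩
        have := List.length_eraseIdx_add_one hj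
        rw [CoxeterSystem.IsReduced, ← e]
        have := hω.eq
        omega
  induction hv using Subgroup.closure_induction_right with
  | one => exact ⟨[], by simp [CoxeterSystem.IsReduced], by simp, by simp⟩
  | mul_right x _ y hy ih => exact step x y hy ih
  | mul_inv_cancel x _ y hy ih =>
    obtain ⟨i, rfl⟩ := hP hy
    rw [inv_simple]
    exact step x _ hy ih

theorem length_mul_of_mem_minCosetReps {P : Set W} (hP : P ⊆ Set.range cs.simple) {d v : W}
    (hd : d ∈ minCosetReps cs P) (hv : v ∈ Subgroup.closure P) :
    cs.length (d * v) = cs.length d + cs.length v := by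
  obtain ⟨ω, hω, rfl, hωP⟩ := exists_isReduced_of_mem_closure cs hP hv
  clear hv
  induction ω using List.reverseRecOn with
  | nil => simp
  | append_singleton ω i ih =>
    have hω' : cs.IsReduced ω := by simpa using hω.take ω.length
    have hP' : ∀ k ∈ ω, cs.simple k ∈ P := fun k hk => hωP k (by simp [hk])
    have hi : cs.simple i ∈ P := hωP i (by simp)
    have ih := ih hω' hP'
    have e1 := hω.eq
    have e2 := hω'.eq
    rw [wordProd_append, wordProd_singleton] at e1 ⊢
    rw [List.length_append, List.length_singleton] at e1
    rcases cs.length_mul_simple (d * cs.wordProd ω) i with hl | hl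
    · rw [← mul_assoc]
      omega
    · exfalso
      obtain ⟨α, hα, rfl⟩ := cs.exists_isReduced d
      rcases exchange cs α (cs.wordProd ω) i (by omega) with h | ⟨j, hj, e⟩
      · omega
        -- Erasing a letter of `d` would give a shorter element of `d * W_P`.
      · have hmin := hd (cs.wordProd ω * cs.simple i * (cs.wordProd ω)⁻¹)
          (mul_mem (mul_mem (wordProd_mem_closure cs hP') (Subgroup.subset_closure hi))
            (inv_mem (wordProd_mem_closure cs hP')))
        rw [← mul_assoc, ← mul_assoc, e, mul_inv_cancel_right, hα.eq] at hmin
        have := cs.length_wordProd_le (α.eraseIdx j)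
        have := List.length_eraseIdx_add_one hj
        omega

/-! ### Kilmoyer's theorem -/

/-- The inductive core: induction on the reduced word `ω` from the right, where each step moves the
last letter `p` of `ω` across `d` as the simple reflection `d * p * d⁻¹ ∈ Q`. -/
theorem mem_closure_of_mul_eq_mul {P Q : Set W} (hP : P ⊆ Set.range cs.simple)
    (hQ : Q ⊆ Set.range cs.simple) {d : W} (hdQ : d⁻¹ ∈ minCosetReps cs Q)
    (hdP : d ∈ minCosetReps cs P) (ω : List B) (hω : cs.IsReduced ω)
    (hωP : ∀ i ∈ ω, cs.simple i ∈ P) (u : W) (hu : u ∈ Subgroup.closure Q)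
    (h : u * d = d * cs.wordProd ω) :
    u ∈ Subgroup.closure (Q ∩ ((fun p => d * p * d⁻¹) '' P)) := by
  induction ω using List.reverseRecOn generalizing u with
  | nil =>
    have : u = 1 := by simpa using h
    rw [this]
    exact one_mem _
  | append_singleton ω i ih =>
    have hω' : cs.IsReduced ω := by simpa using hω.take ω.length
    have hP' : ∀ k ∈ ω, cs.simple k ∈ P := fun k hk => hωP k (by simp [hk])
    have hi : cs.simple i ∈ P := hωP i (by simp)
    have hv := length_mul_of_mem_minCosetReps cs hP hdP (wordProd_mem_closure cs hωP)
    have hv' := length_mul_of_mem_minCosetReps cs hP hdP (wordProd_mem_closure cs hP')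
    rw [← h, hω.eq, List.length_append, List.length_singleton] at hv
    rw [hω'.eq] at hv'
    have hudp : u * d * cs.simple i = d * cs.wordProd ω := by
      rw [h, wordProd_append, wordProd_singleton]
      simp [mul_assoc]
    have hdp := length_mul_of_mem_minCosetReps cs hP hdP (Subgroup.subset_closure hi)
    rw [length_simple] at hdp
    have ht : d * cs.simple i * d⁻¹ ∈ Subgroup.closure Q := by
      obtain ⟨α, -, rfl, hαQ⟩ := exists_isReduced_of_mem_closure cs hQ hu
      rcases exchange cs α d i (by rw [hudp]; omega) with h' | ⟨j, -, e⟩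
      · omega
      · have hmem : cs.wordProd (α.eraseIdx j) ∈ Subgroup.closure Q :=
          wordProd_mem_closure cs fun k hk => hαQ k (List.mem_of_mem_eraseIdx hk)
        have e' : d * cs.simple i * d⁻¹ =
            (cs.wordProd α)⁻¹ * cs.wordProd (α.eraseIdx j) := by
          rw [eq_inv_mul_iff_mul_eq, ← mul_assoc, ← mul_assoc, e, mul_inv_cancel_right]
        rw [e']
        exact mul_mem (inv_mem hu) hmem
    have hlen : cs.length (d * cs.simple i * d⁻¹) = 1 := by
      have h1 := length_mul_of_mem_minCosetReps cs hQ hdQ (inv_mem ht)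
      rw [← mul_inv_rev, length_inv, length_inv, length_inv, inv_mul_cancel_right] at h1
      omega
    have htQ : d * cs.simple i * d⁻¹ ∈ Q := by
      obtain ⟨β, hβ, e, hβQ⟩ := exists_isReduced_of_mem_closure cs hQ ht
      rw [e, hβ.eq, List.length_eq_one_iff] at hlen
      obtain ⟨k, rfl⟩ := hlen
      rw [e, wordProd_singleton]
      exact hβQ k (by simp)
    have hrec := ih hω' hP' (u * (d * cs.simple i * d⁻¹)) (mul_mem hu ht) (by
      rw [← hudp]
      group)
    have hL : d * cs.simple i * d⁻¹ ∈ Subgroup.closure (Q ∩ ((fun p => d * p * d⁻¹) '' P)) :=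
      Subgroup.subset_closure ⟨htQ, cs.simple i, hi, rfl⟩
    exact (Subgroup.mul_mem_cancel_right _ hL).1 hrec

end Kilmoyer

/-- (Kilmoyer) Let `(W, S)` be a finite Coxeter system, `P, Q ⊆ S`, and let
`d ∈ D^{Q,P} = {w : w⁻¹ ∈ W^Q and w ∈ W^P}`. Then `W_Q ∩ d W_P d⁻¹` is the standard parabolic
subgroup generated by `L = Q ∩ d P d⁻¹ ⊆ S`. -/
theorem stmt9 {B W : Type*} [Group W] [Finite W] {M : CoxeterMatrix B}
    (cs : CoxeterSystem M W) (P Q : Set W)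
    (hP : P ⊆ Set.range cs.simple) (hQ : Q ⊆ Set.range cs.simple)
    (d : W) (hd : d⁻¹ ∈ minCosetReps cs Q ∧ d ∈ minCosetReps cs P) :
    Subgroup.closure Q ⊓
        Subgroup.map (MulAut.conj d).toMonoidHom (Subgroup.closure P) =
      Subgroup.closure (Q ∩ ((fun p => d * p * d⁻¹) '' P)) := by
  apply le_antisymm
  · rintro u ⟨hu, v, hv, huv⟩
    obtain ⟨ω, hω, rfl, hωP⟩ := Kilmoyer.exists_isReduced_of_mem_closure cs hP hv
    refine Kilmoyer.mem_closure_of_mul_eq_mul cs hP hQ hd.1 hd.2 ω hω hωP u hu ?_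
    rw [← huv]
    simp
  · rw [Subgroup.closure_le]
    rintro _ ⟨hq, p, hp, rfl⟩
    exact ⟨Subgroup.subset_closure hq, p, Subgroup.subset_closure hp, rfl⟩
end

section
/- (Howlett) Let (W, S) be a finite Coxeter system and let P, Q ⊆ S. Then every element w ∈ W can be written uniquely in the form w = u·d·v, where d ∈ D^{Q,P} is the unique minimal length element of the double coset W_Q·w·W_P, v ∈ W_P, and u belongs to W_Q ∩ W^L with L := Q ∩ {d·p·d⁻¹ : p ∈ P} (that is, u ∈ W_Q is of minimal length in its coset u·W_L). -/
/-- The double coset `W_Q * w * W_P`. -/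
def doubleCoset {W : Type*} [Group W] (Q P : Set W) (w : W) : Set W :=
  {x : W | ∃ u ∈ Subgroup.closure Q, ∃ v ∈ Subgroup.closure P, x = u * w * v}

/-! ### The parity cocycle and strong exchange -/

section Exchange

variable {B W : Type*} [Group W] {M : CoxeterMatrix B} (cs : CoxeterSystem M W)

theorem funEnd_mul_apply {α : Type*} (f g : Function.End α) (x : α) : (f * g) x = f (g x) := rfl

theorem funEnd_one_apply {α : Type*} (x : α) : (1 : Function.End α) x = x := rfl

open Classical in
/-- The action of the simple reflection `s i` on `W × ZMod 2`, where the first component carries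
the conjugation action on all of `W` rather than only on the set of reflections. -/
noncomputable def exchangeStep (i : B) : Function.End (W × ZMod 2) :=
  fun x => (cs.simple i * x.1 * cs.simple i, x.2 + if x.1 = cs.simple i then 1 else 0)

open Classical in
/-- With `x = s i * s j`, the power `(exchangeStep i * exchangeStep j) ^ k` counts how often `t`
occurs among the first `2 * k` elements of the sequence `s j * x ^ n`. -/
theorem exchangeStep_pow (i j : B) (k : ℕ) (t : W) (e : ZMod 2) :
    ((exchangeStep cs i * exchangeStep cs j) ^ k) (t, e) =
      ((cs.simple i * cs.simple j) ^ k * t * ((cs.simple i * cs.simple j) ^ k)⁻¹,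
        e + ∑ n ∈ Finset.range (2 * k),
          if t = cs.simple j * (cs.simple i * cs.simple j) ^ n then 1 else 0) := by
  induction k with
  | zero => simp [funEnd_one_apply]
  | succ k ih =>
    set x := cs.simple i * cs.simple j with hx
    have hconj : ∀ n : ℕ, (x ^ n)⁻¹ * cs.simple j = cs.simple j * x ^ n := by
      intro n
      induction n with
      | zero => simp
      | succ n ihn =>
        have hj : x⁻¹ * cs.simple j = cs.simple j * x := by simp [hx, mul_assoc]
        rw [pow_succ', mul_inv_rev, mul_assoc, hj, ← mul_assoc, ihn, mul_assoc, ← pow_succ,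
          pow_succ']
    rw [pow_succ', funEnd_mul_apply, ih, funEnd_mul_apply]
    have h1 : (x ^ k * t * (x ^ k)⁻¹ = cs.simple j) ↔ t = cs.simple j * x ^ (2 * k) := by
      rw [mul_inv_eq_iff_eq_mul, ← eq_inv_mul_iff_mul_eq, ← mul_assoc, hconj, mul_assoc,
        ← pow_add, two_mul]
    have h2 : (cs.simple j * (x ^ k * t * (x ^ k)⁻¹) * cs.simple j = cs.simple i) ↔
        t = cs.simple j * x ^ (2 * k + 1) := by
      have hy : ∀ y : W, cs.simple j * y * cs.simple j = cs.simple i ↔ y = cs.simple j * x := by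
        intro y
        constructor
        · intro h
          rw [hx, ← h]
          simp [mul_assoc]
        · rintro rfl
          simp [hx, mul_assoc]
      rw [hy, mul_inv_eq_iff_eq_mul, ← eq_inv_mul_iff_mul_eq, mul_assoc, ← mul_assoc, hconj,
        mul_assoc, ← pow_succ', ← pow_add]
      ring_nf
    simp only [exchangeStep, h1, h2, Nat.mul_succ, Finset.sum_range_succ]
    refine Prod.ext ?_ ?_
    · simp [pow_succ', hx, mul_assoc]
    · simp [add_assoc]

theorem exchangeStep_isLiftable : M.IsLiftable (exchangeStep cs) := by
  classical
  intro i j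
  funext ⟨t, e⟩
  rw [exchangeStep_pow, two_mul, Finset.sum_range_add]
  simp only [pow_add, cs.simple_mul_simple_pow, one_mul, CharTwo.add_self_eq_zero]
  simp [funEnd_one_apply]

/-- The action of `W` on `W × ZMod 2` extending `exchangeStep`. -/
noncomputable def exchangeAction : W →* Function.End (W × ZMod 2) :=
  cs.lift ⟨exchangeStep cs, exchangeStep_isLiftable cs⟩

/-- The parity of the number of occurrences of `t` in the right inversion sequence of a word
for `w`. It does not depend on the word, being read off from `exchangeAction`. -/
noncomputable def inversionParity (w t : W) : ZMod 2 := (exchangeAction cs w (t, 0)).2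

theorem exchangeAction_simple (i : B) : exchangeAction cs (cs.simple i) = exchangeStep cs i :=
  cs.lift_apply_simple _ i

theorem exchangeAction_apply (w t : W) (e : ZMod 2) :
    exchangeAction cs w (t, e) = (w * t * w⁻¹, e + inversionParity cs w t) := by
  unfold inversionParity
  induction w using cs.simple_induction_left generalizing t e with
  | one => simp [funEnd_one_apply]
  | mul_simple_left w i ih =>
    rw [map_mul, funEnd_mul_apply, funEnd_mul_apply, ih t e, ih t 0,
      exchangeAction_simple]
    simp [exchangeStep, mul_assoc, add_assoc]

theorem inversionParity_mul (a b t : W) :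
    inversionParity cs (a * b) t =
      inversionParity cs b t + inversionParity cs a (b * t * b⁻¹) := by
  conv_lhs => unfold inversionParity
  rw [map_mul, funEnd_mul_apply, exchangeAction_apply,
    exchangeAction_apply]
  simp

theorem inversionParity_one (t : W) : inversionParity cs 1 t = 0 := by
  simp [inversionParity, funEnd_one_apply]

open Classical in
theorem inversionParity_simple (i : B) (t : W) :
    inversionParity cs (cs.simple i) t = if t = cs.simple i then 1 else 0 := by
  simp [inversionParity, exchangeAction_simple, exchangeStep]

theorem inversionParity_self {t : W} (ht : cs.IsReflection t) : inversionParity cs t t = 1 := by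
  obtain ⟨v, i, rfl⟩ := ht
  have h := inversionParity_mul cs v v⁻¹ (v * cs.simple i * v⁻¹)
  rw [mul_inv_cancel, inversionParity_one] at h
  rw [inversionParity_mul, inversionParity_mul]
  simp only [mul_assoc, inv_mul_cancel_left, inv_inv, inv_mul_cancel, mul_one, one_mul,
    cs.simple_mul_simple_self, inversionParity_simple, if_true, cs.inv_simple] at h ⊢
  rw [add_left_comm, ← h, add_zero]

/-- Strong exchange: if `t` has nonzero parity, right multiplication by `t` deletes one letter
of any given word. -/
theorem exists_delete (ω : List B) (t : W) (h : inversionParity cs (cs.wordProd ω) t ≠ 0) :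
    ∃ ω' : List B, ω'.Sublist ω ∧ ω'.length + 1 = ω.length ∧
      cs.wordProd ω' = cs.wordProd ω * t := by
  classical
  induction ω with
  | nil => simp [inversionParity_one] at h
  | cons i ω ih =>
    by_cases h0 : inversionParity cs (cs.wordProd ω) t = 0
    · refine ⟨ω, List.sublist_cons_self i ω, by simp, ?_⟩
      rw [cs.wordProd_cons, inversionParity_mul, h0, zero_add, inversionParity_simple] at h
      have h' : cs.wordProd ω * t * (cs.wordProd ω)⁻¹ = cs.simple i := by
        by_contra hne
        exact h (if_neg hne)
      rw [cs.wordProd_cons, ← h']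
      have h2 := cs.simple_mul_simple_self i
      rw [← h'] at h2
      calc cs.wordProd ω
          = (cs.wordProd ω * t * (cs.wordProd ω)⁻¹ * (cs.wordProd ω * t * (cs.wordProd ω)⁻¹))
              * cs.wordProd ω := by rw [h2, one_mul]
        _ = _ := by group
    · obtain ⟨ω', hs, hl, hp⟩ := ih h0
      exact ⟨i :: ω', hs.cons_cons i, by simp [hl], by simp [cs.wordProd_cons, hp, mul_assoc]⟩

theorem length_mul_lt_of_inversionParity {w t : W} (h : inversionParity cs w t ≠ 0) :
    cs.length (w * t) < cs.length w := by
  obtain ⟨ω, hω, rfl⟩ := cs.exists_isReduced w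
  obtain ⟨ω', -, hl, hp⟩ := exists_delete cs ω t h
  rw [← hp, hω.eq]
  have := cs.length_wordProd_le ω'
  omega

theorem inversionParity_ne_zero_iff {w t : W} (ht : cs.IsReflection t) :
    inversionParity cs w t ≠ 0 ↔ cs.length (w * t) < cs.length w := by
  refine ⟨length_mul_lt_of_inversionParity cs, fun hlt h0 => ?_⟩
  have h1 : inversionParity cs (w * t) t ≠ 0 := by
    rw [inversionParity_mul, inversionParity_self cs ht, mul_inv_cancel_right, h0]
    simp
  have h2 := length_mul_lt_of_inversionParity cs h1
  rw [mul_assoc, ht.mul_self, mul_one] at h2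
  omega

/-- Exchange for a product: an inversion of `a * b` comes from `b` or from `a`. -/
theorem exchange_mul {a b t : W} (ht : cs.IsReflection t)
    (h : cs.length (a * b * t) < cs.length (a * b)) :
    cs.length (b * t) < cs.length b ∨ cs.length (a * (b * t * b⁻¹)) < cs.length a := by
  rw [← inversionParity_ne_zero_iff cs ht, inversionParity_mul] at h
  by_cases h0 : inversionParity cs b t = 0
  · rw [h0, zero_add] at h
    exact Or.inr (length_mul_lt_of_inversionParity cs h)
  · exact Or.inl (length_mul_lt_of_inversionParity cs h0)

/-! ### Standard parabolic subgroups -/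

variable {P Q : Set W}

theorem isReflection_of_mem (hP : P ⊆ Set.range cs.simple) {p : W} (hp : p ∈ P) :
    cs.IsReflection p := by
  obtain ⟨i, rfl⟩ := hP hp
  exact cs.isReflection_simple i

/-- All inversions of an element of `W_P` lie in `W_P`. -/
theorem mem_closure_of_inversionParity (hP : P ⊆ Set.range cs.simple) {v t : W}
    (hv : v ∈ Subgroup.closure P) (h : inversionParity cs v t ≠ 0) :
    t ∈ Subgroup.closure P := by
  classical
  induction hv using Subgroup.closure_induction generalizing t with
  | mem p hp =>
    obtain ⟨i, rfl⟩ := hP hp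
    rw [inversionParity_simple] at h
    have : t = cs.simple i := by
      by_contra hne
      exact h (if_neg hne)
    exact this ▸ Subgroup.subset_closure hp
  | one => exact absurd (inversionParity_one cs t) h
  | mul a b ha hb iha ihb =>
    rw [inversionParity_mul] at h
    by_cases h0 : inversionParity cs b t = 0
    · rw [h0, zero_add] at h
      have := mul_mem (mul_mem (inv_mem hb) (iha h)) hb
      simpa [mul_assoc] using this
    · exact ihb h0
  | inv a ha iha =>
    have h1 := inversionParity_mul cs a a⁻¹ t
    rw [mul_inv_cancel, inversionParity_one] at h1
    have h2 : inversionParity cs a (a⁻¹ * t * a⁻¹⁻¹) ≠ 0 := by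
      intro h0
      rw [h0, add_zero] at h1
      exact h h1.symm
    have := mul_mem (mul_mem ha (iha h2)) (inv_mem ha)
    simpa [mul_assoc] using this

/-- Every element of `W_P` has a reduced word with letters in `P`. -/
theorem exists_reduced_word (hP : P ⊆ Set.range cs.simple) {v : W}
    (hv : v ∈ Subgroup.closure P) :
    ∃ ω : List B, (∀ i ∈ ω, cs.simple i ∈ P) ∧ cs.wordProd ω = v ∧ ω.length = cs.length v := by
  have step : ∀ (v p : W), p ∈ P →
      (∃ ω : List B, (∀ i ∈ ω, cs.simple i ∈ P) ∧ cs.wordProd ω = v ∧ ω.length = cs.length v) →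
      ∃ ω : List B, (∀ i ∈ ω, cs.simple i ∈ P) ∧ cs.wordProd ω = v * p ∧
        ω.length = cs.length (v * p) := by
    rintro v p hp ⟨ω, hω, rfl, hl⟩
    obtain ⟨i, rfl⟩ := hP hp
    rcases cs.length_mul_simple (cs.wordProd ω) i with h | h
    · refine ⟨ω ++ [i], ?_, by simp [cs.wordProd_append], by simp [h, hl]⟩
      intro j hj
      rcases List.mem_append.1 hj with hj | hj
      · exact hω j hj
      · rwa [List.mem_singleton.1 hj]
    · obtain ⟨ω', hs, hl', hp'⟩ := exists_delete cs ω (cs.simple i)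
        ((inversionParity_ne_zero_iff cs (cs.isReflection_simple i)).2 (by omega))
      exact ⟨ω', fun j hj => hω j (hs.subset hj), hp', by omega⟩
  induction hv using Subgroup.closure_induction_right with
  | one => exact ⟨[], by simp⟩
  | mul_right x hx y hy ih => exact step x y hy ih
  | mul_inv_cancel x hx y hy ih =>
    rw [(isReflection_of_mem cs hP hy).inv]
    exact step x y hy ih

theorem exists_descent (hP : P ⊆ Set.range cs.simple) {v : W}
    (hv : v ∈ Subgroup.closure P) (h1 : v ≠ 1) :
    ∃ p ∈ P, cs.length (p * v) + 1 = cs.length v := by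
  obtain ⟨ω, hω, rfl, hl⟩ := exists_reduced_word cs hP hv
  cases ω with
  | nil => simp at h1
  | cons i ω =>
    refine ⟨cs.simple i, hω i (by simp), ?_⟩
    have := cs.length_wordProd_le ω
    rcases cs.length_simple_mul (cs.wordProd (i :: ω)) i with h | h
    · rw [cs.wordProd_cons, cs.simple_mul_simple_cancel_left] at h
      rw [cs.wordProd_cons] at hl
      simp at hl
      omega
    · exact h

theorem mem_of_length_one (hP : P ⊆ Set.range cs.simple) {r : W}
    (hr : r ∈ Subgroup.closure P) (h1 : cs.length r = 1) : r ∈ P := by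
  obtain ⟨ω, hω, rfl, hl⟩ := exists_reduced_word cs hP hr
  rw [h1, List.length_eq_one_iff] at hl
  obtain ⟨i, rfl⟩ := hl
  simpa using hω i (by simp)

/-! ### Minimal coset representatives and double cosets -/

/-- Lengths add along the decomposition `W = W^P * W_P`. -/
theorem length_mul_of_minCosetReps (hP : P ⊆ Set.range cs.simple) {x : W}
    (hx : x ∈ minCosetReps cs P) {v : W} (hv : v ∈ Subgroup.closure P) :
    cs.length (x * v) = cs.length x + cs.length v := by
  induction hn : cs.length v generalizing v with
  | zero =>
    rw [cs.length_eq_zero_iff.1 hn, mul_one, add_zero]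
  | succ n ih =>
    have hne : v⁻¹ ≠ 1 := by
      intro h
      rw [inv_eq_one.1 h, cs.length_one] at hn
      omega
    obtain ⟨p, hp, hlen⟩ := exists_descent cs hP (inv_mem hv) hne
    have hpr := isReflection_of_mem cs hP hp
    have hpm : p ∈ Subgroup.closure P := Subgroup.subset_closure hp
    have hvp : cs.length (v * p) = n := by
      rw [← cs.length_inv (v * p), mul_inv_rev, hpr.inv]
      rw [cs.length_inv v] at hlen
      omega
    have hvpm : v * p ∈ Subgroup.closure P := mul_mem hv hpm
    have hih := ih hvpm hvp
    have hback : v * p * p = v := by rw [mul_assoc, hpr.mul_self, mul_one]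
    obtain ⟨i, rfl⟩ := hP hp
    rcases cs.length_mul_simple (x * (v * cs.simple i)) i with h | h
    · rw [mul_assoc x, hback] at h
      omega
    · exfalso
      rcases exchange_mul cs (a := x) (b := v * cs.simple i) hpr (by omega) with h' | h'
      · rw [hback] at h'
        omega
      · have := hx _ (mul_mem (mul_mem hvpm hpm) (inv_mem hvpm))
        omega

theorem eq_of_mul_mem_minCosetReps (hP : P ⊆ Set.range cs.simple) {x v : W}
    (hx : x ∈ minCosetReps cs P) (hv : v ∈ Subgroup.closure P)
    (hxv : x * v ∈ minCosetReps cs P) : v = 1 := by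
  have h1 := length_mul_of_minCosetReps cs hP hx hv
  have h2 := hxv v⁻¹ (inv_mem hv)
  rw [mul_inv_cancel_right] at h2
  exact cs.length_eq_zero_iff.1 (by omega)

theorem length_mul_of_inv_minCosetReps (hQ : Q ⊆ Set.range cs.simple) {d : W}
    (hd : d⁻¹ ∈ minCosetReps cs Q) {u : W} (hu : u ∈ Subgroup.closure Q) :
    cs.length (u * d) = cs.length u + cs.length d := by
  have := length_mul_of_minCosetReps cs hQ hd (inv_mem hu)
  rw [← mul_inv_rev, cs.length_inv, cs.length_inv, cs.length_inv] at this
  omega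

/-- Uniqueness of the representative in `D^{Q,P}` together with Kilmoyer's theorem. -/
theorem eq_and_mem_of_mul_eq_mul (hP : P ⊆ Set.range cs.simple) (hQ : Q ⊆ Set.range cs.simple)
    {d d' : W} (hdQ : d⁻¹ ∈ minCosetReps cs Q) (hdP : d ∈ minCosetReps cs P)
    (hdQ' : d'⁻¹ ∈ minCosetReps cs Q) (hdP' : d' ∈ minCosetReps cs P)
    {u v : W} (hu : u ∈ Subgroup.closure Q) (hv : v ∈ Subgroup.closure P)
    (h : u * d' = d * v) :
    d' = d ∧ u ∈ Subgroup.closure (Q ∩ ((fun p => d * p * d⁻¹) '' P)) := by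
  induction hn : cs.length u generalizing u v with
  | zero =>
    obtain rfl := cs.length_eq_zero_iff.1 hn
    rw [one_mul] at h
    subst h
    rw [eq_of_mul_mem_minCosetReps cs hP hdP hv hdP']
    exact ⟨mul_one d, one_mem _⟩
  | succ n ih =>
    have hne : u ≠ 1 := by
      rintro rfl
      rw [cs.length_one] at hn
      omega
    obtain ⟨s, hs, hlen⟩ := exists_descent cs hQ hu hne
    have hsr := isReflection_of_mem cs hQ hs
    have hsm : s ∈ Subgroup.closure Q := Subgroup.subset_closure hs
    have hsu : s * u ∈ Subgroup.closure Q := mul_mem hsm hu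
    have e1 := length_mul_of_inv_minCosetReps cs hQ hdQ' hu
    have e2 := length_mul_of_inv_minCosetReps cs hQ hdQ' hsu
    have e3 := length_mul_of_inv_minCosetReps cs hQ hdQ hsm
    have hs1 : cs.length s = 1 := by
      obtain ⟨i, rfl⟩ := hQ hs
      exact cs.length_simple i
    have hlt : cs.length (v⁻¹ * d⁻¹ * s) < cs.length (v⁻¹ * d⁻¹) := by
      have a1 : v⁻¹ * d⁻¹ * s = (s * u * d')⁻¹ := by
        rw [mul_assoc s, h, mul_inv_rev, mul_inv_rev, hsr.inv]
      have a2 : v⁻¹ * d⁻¹ = (u * d')⁻¹ := by rw [h, mul_inv_rev]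
      rw [a1, a2, cs.length_inv, cs.length_inv]
      omega
    -- The letter removed by `s` cannot come from `d`, so it comes from `v`.
    have hr : d⁻¹ * s * d ∈ Subgroup.closure P := by
      rw [← inversionParity_ne_zero_iff cs hsr, inversionParity_mul] at hlt
      by_cases h0 : inversionParity cs d⁻¹ s = 0
      · rw [h0, zero_add, inv_inv] at hlt
        exact mem_closure_of_inversionParity cs hP (inv_mem hv) hlt
      · have b1 := length_mul_lt_of_inversionParity cs h0
        have b2 := hdQ s hsm
        omega
    have hsd : d * (d⁻¹ * s * d) = s * d := by group
    have hrP : d⁻¹ * s * d ∈ P := by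
      refine mem_of_length_one cs hP hr ?_
      have := length_mul_of_minCosetReps cs hP hdP hr
      rw [hsd] at this
      omega
    have hsL : s ∈ Q ∩ ((fun p => d * p * d⁻¹) '' P) :=
      ⟨hs, _, hrP, by simp [mul_assoc]⟩
    obtain ⟨k1, k2⟩ := ih hsu (mul_mem hr hv)
      (by rw [mul_assoc, h, ← mul_assoc, ← mul_assoc, hsd]) (by omega)
    refine ⟨k1, ?_⟩
    have := mul_mem (Subgroup.subset_closure hsL) k2
    rwa [← mul_assoc, hsr.mul_self, one_mul] at this

end Exchange

/-- (Howlett) Let `(W, S)` be a finite Coxeter system and `P, Q ⊆ S`. Every `w ∈ W` can be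
written uniquely as `w = u * d * v` where `d ∈ D^{Q,P}` is the minimal length element of the
double coset `W_Q * w * W_P`, `v ∈ W_P`, and `u ∈ W_Q ∩ W^L` with `L = Q ∩ d P d⁻¹`. -/
theorem stmt10 {B W : Type*} [Group W] [Finite W] {M : CoxeterMatrix B}
    (cs : CoxeterSystem M W) (P Q : Set W)
    (hP : P ⊆ Set.range cs.simple) (hQ : Q ⊆ Set.range cs.simple) (w : W) :
    ∃! udv : W × W × W,
      (udv.2.1⁻¹ ∈ minCosetReps cs Q ∧ udv.2.1 ∈ minCosetReps cs P) ∧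
      udv.2.1 ∈ doubleCoset Q P w ∧
      udv.2.2 ∈ Subgroup.closure P ∧
      udv.1 ∈ Subgroup.closure Q ∧
      udv.1 ∈ minCosetReps cs (Q ∩ ((fun p => udv.2.1 * p * udv.2.1⁻¹) '' P)) ∧
      w = udv.1 * udv.2.1 * udv.2.2 := by
  classical
  -- A shortest element of a nonempty subset of `W`.
  have shortest : ∀ A : Set W, A.Nonempty → ∃ x ∈ A, ∀ y ∈ A, cs.length x ≤ cs.length y := by
    intro A hA
    obtain ⟨x, hx, hmin⟩ := (measure cs.length).wf.has_min A hA
    exact ⟨x, hx, fun y hy => not_lt.1 (hmin y hy)⟩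
  have hex : ∃ udv : W × W × W,
      (udv.2.1⁻¹ ∈ minCosetReps cs Q ∧ udv.2.1 ∈ minCosetReps cs P) ∧
      udv.2.1 ∈ doubleCoset Q P w ∧
      udv.2.2 ∈ Subgroup.closure P ∧
      udv.1 ∈ Subgroup.closure Q ∧
      udv.1 ∈ minCosetReps cs (Q ∩ ((fun p => udv.2.1 * p * udv.2.1⁻¹) '' P)) ∧
      w = udv.1 * udv.2.1 * udv.2.2 := by
    obtain ⟨d, ⟨a, ha, b, hb, hd⟩, hmin⟩ := shortest (doubleCoset Q P w)
      ⟨w, 1, one_mem _, 1, one_mem _, by simp⟩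
    set L := Q ∩ ((fun p => d * p * d⁻¹) '' P) with hL
    have hLQ : Subgroup.closure L ≤ Subgroup.closure Q :=
      Subgroup.closure_mono Set.inter_subset_left
    have hLP : ∀ l ∈ Subgroup.closure L, d⁻¹ * l * d ∈ Subgroup.closure P := by
      intro l hl
      have hle : Subgroup.closure L ≤
          (Subgroup.closure P).comap (MulAut.conj d⁻¹).toMonoidHom := by
        rw [Subgroup.closure_le]
        rintro _ ⟨-, p, hp, rfl⟩
        simpa [mul_assoc] using Subgroup.subset_closure hp
      simpa using hle hl
    obtain ⟨u, ⟨l, hl, hul⟩, humin⟩ := shortest {x | ∃ l ∈ Subgroup.closure L, x = a⁻¹ * l}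
      ⟨a⁻¹, 1, one_mem _, by simp⟩
    refine ⟨(u, d, d⁻¹ * l⁻¹ * d * b⁻¹), ⟨?_, ?_⟩, ⟨a, ha, b, hb, hd⟩, ?_, ?_, ?_, ?_⟩
    · intro c hc
      have := hmin (c⁻¹ * d) ⟨c⁻¹ * a, mul_mem (inv_mem hc) ha, b, hb, by rw [hd]; group⟩
      rw [← cs.length_inv (c⁻¹ * d), ← cs.length_inv d] at this
      simpa using this
    · intro c hc
      exact hmin (d * c) ⟨a, ha, b * c, mul_mem hb hc, by rw [hd]; group⟩
    · exact mul_mem (hLP _ (inv_mem hl)) (inv_mem hb)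
    · exact hul ▸ mul_mem (inv_mem ha) (hLQ hl)
    · intro c hc
      exact humin (u * c) ⟨l * c, mul_mem hl hc, by rw [hul]; group⟩
    · show w = u * d * (d⁻¹ * l⁻¹ * d * b⁻¹)
      rw [hul, hd]
      group
  refine existsUnique_of_exists_of_unique hex ?_
  rintro ⟨u, d, v⟩ ⟨u', d', v'⟩ ⟨⟨hdQ, hdP⟩, -, hv, hu, huL, hw⟩
    ⟨⟨hdQ', hdP'⟩, -, hv', hu', huL', hw'⟩
  dsimp only at *
  have hkey : (u⁻¹ * u') * d' = d * (v * v'⁻¹) := by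
    have : u * d * v = u' * d' * v' := hw.symm.trans hw'
    calc (u⁻¹ * u') * d' = u⁻¹ * (u' * d' * v') * v'⁻¹ := by group
      _ = d * (v * v'⁻¹) := by rw [← this]; group
  obtain ⟨rfl, hmem⟩ := eq_and_mem_of_mul_eq_mul cs hP hQ hdQ hdP hdQ' hdP'
    (mul_mem (inv_mem hu) hu') (mul_mem hv (inv_mem hv')) hkey
  have h1 := eq_of_mul_mem_minCosetReps cs (Set.inter_subset_left.trans hQ) huL hmem
    (by rwa [mul_inv_cancel_left])
  obtain rfl : u = u' := inv_mul_eq_one.1 h1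
  obtain rfl : v = v' := mul_left_cancel (hw.symm.trans hw')
  rfl
end
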